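/- arXiv:1805.09356 — 3 statements merged into one kernel-verified Lean document; each statement's English description precedes it below -/
import Mathlib

section
/- Let R be a complete regular local ring and Λ a regular R-algebra (Λ finitely generated free as R-module, Z(Λ) = R, gl.dim Λ = dim R). Then for any finitely generated Λ-module M, depth_R M + pd_Λ M = dim R. -/
noncomputable section
open CategoryTheory IsLocalRing

/-- The depth of a module over a local ring: the supremum of lengths of `M`-regular
sequences contained in the maximal ideal. -/
def rDepth (R : Type) [CommRing R] [IsLocalRing R]
    (M : Type) [AddCommGroup M] [Module R M] : ℕ :=
  sSup {n : ℕ | ∃ rs : List R, rs.length = n ∧ (∀ r ∈ rs, r ∈ maximalIdeal R) ∧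
    RingTheory.Sequence.IsRegular M rs}

/-- The depth (over `R`) of a module over an `R`-algebra `Λ`, via restriction of
scalars along `R → Λ`. -/
def rDepthOver (R : Type) [CommRing R] [IsLocalRing R] (Λ : Type) [Ring Λ] [Algebra R Λ]
    (M : ModuleCat Λ) : ℕ :=
  letI : Module R M := Module.compHom M (algebraMap R Λ)
  rDepth R M

/-- `M` has projective dimension at most `n` over `Λ`: all Ext-groups `Ext^i(M, N)`
vanish for `i > n`. -/
def pdLE (Λ : Type) [Ring Λ] (M : ModuleCat Λ) (n : ℕ) : Prop :=
  ∀ (N : ModuleCat Λ) (i : ℕ), n < i →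
    Subsingleton (((Ext ℤ (ModuleCat Λ) i).obj (Opposite.op M)).obj N)

/-- The projective dimension of `M` over `Λ` (as a natural number; `0` if infinite). -/
def projDim (Λ : Type) [Ring Λ] (M : ModuleCat Λ) : ℕ :=
  sInf {n : ℕ | pdLE Λ M n}

theorem Ideal.exists_finset_span_eq_map_of_mem_span {R : Type*} [CommRing R] [IsLocalRing R]
    {s : Finset R} (hs : Ideal.span (s : Set R) = maximalIdeal R) {x : R}
    (hx : x ∈ maximalIdeal R) (hx2 : x ∉ maximalIdeal R * maximalIdeal R) :
    ∃ t : Finset (R ⧸ Ideal.span {x}), t.card + 1 ≤ s.card ∧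
      Ideal.span (t : Set (R ⧸ Ideal.span {x})) =
        (maximalIdeal R).map (Ideal.Quotient.mk (Ideal.span {x})) := by
  classical
  obtain ⟨f, -, hf⟩ := Submodule.mem_span_finset.mp (hs.symm.le hx)
  obtain ⟨a, has, ha⟩ : ∃ a ∈ s, f a ∉ maximalIdeal R := by
    by_contra! h
    refine hx2 (hf ▸ Ideal.sum_mem _ fun a ha ↦ Ideal.mul_mem_mul (h a ha) ?_)
    exact hs ▸ Ideal.subset_span ha
  have hu : IsUnit (f a) := by simpa using ha
  refine ⟨(s.erase a).image (Ideal.Quotient.mk _), ?_, ?_⟩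
  · have := Finset.card_image_le (s := s.erase a) (f := Ideal.Quotient.mk (Ideal.span {x}))
    have := Finset.card_erase_add_one has
    omega
  · rw [← hs, Ideal.map_span, Finset.coe_image]
    refine le_antisymm (Ideal.span_mono (Set.image_mono (by simp))) (Ideal.span_le.mpr ?_)
    rintro _ ⟨b, hb, rfl⟩
    by_cases hba : b = a
    · subst hba
      rw [SetLike.mem_coe, ← Ideal.unit_mul_mem_iff_mem _ (hu.map (Ideal.Quotient.mk _)), ← map_mul]
      have h0 : Ideal.Quotient.mk (Ideal.span {x}) (f b * b) =
          -∑ c ∈ s.erase b, Ideal.Quotient.mk (Ideal.span {x}) (f c * c) := by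
        rw [eq_neg_iff_add_eq_zero, ← map_sum, ← map_add,
          Finset.add_sum_erase s (fun c ↦ f c * c) hb]
        simp only [smul_eq_mul] at hf
        rw [hf, Ideal.Quotient.eq_zero_iff_mem]
        exact Ideal.mem_span_singleton_self x
      rw [h0]
      refine (Ideal.neg_mem_iff _).mpr (Ideal.sum_mem _ fun c hc ↦ ?_)
      rw [map_mul]
      exact Ideal.mul_mem_left _ _ (Ideal.subset_span ⟨c, hc, rfl⟩)
    · exact Ideal.subset_span ⟨b, by simpa [hba] using hb, rfl⟩

theorem isDomain_of_isPrime_span_singleton {R : Type*} [CommRing R] [IsNoetherianRing R]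
    [IsLocalRing R] {x : R} (hx : x ∈ maximalIdeal R) (hp : (Ideal.span {x}).IsPrime)
    (hmin : ∀ p ∈ minimalPrimes R, x ∉ p) : IsDomain R := by
  obtain ⟨q, hq, hqx⟩ := Ideal.exists_minimalPrimes_le (I := ⊥) (J := Ideal.span {x}) bot_le
  have hqp : q.IsPrime := hq.1.1
  have hqb : q = ⊥ := by
    refine Submodule.eq_bot_of_le_smul_of_le_jacobson_bot (maximalIdeal R) q
      (IsNoetherian.noetherian q) (fun y hy ↦ ?_) (maximalIdeal_le_jacobson _)
    obtain ⟨z, rfl⟩ := Ideal.mem_span_singleton'.mp (hqx hy)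
    have hz : z ∈ q := (hqp.mem_or_mem hy).resolve_right (hmin q hq)
    rw [mul_comm]
    exact Submodule.smul_mem_smul hx hz
  have : (⊥ : Ideal R).IsPrime := hqb ▸ hqp
  exact IsDomain.of_bot_isPrime R

theorem exists_isWeaklyRegular_of_le_ringKrullDim (d : ℕ) :
    ∀ (R : Type*) [CommRing R] [IsNoetherianRing R] [IsLocalRing R]
    (_ : (d : WithBot ℕ∞) ≤ ringKrullDim R) (s : Finset R) (_ : s.card ≤ d)
    (_ : Ideal.span (s : Set R) = maximalIdeal R),
    IsDomain R ∧ ∃ rs : List R, rs.length = d ∧ (∀ r ∈ rs, r ∈ maximalIdeal R) ∧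
      RingTheory.Sequence.IsWeaklyRegular R rs := by
  induction d with
  | zero =>
    intro R _ _ _ _ s hs hsm
    obtain rfl : s = ∅ := by simpa using hs
    have : (⊥ : Ideal R).IsPrime := by
      have h : maximalIdeal R = ⊥ := by simpa using hsm.symm
      exact h ▸ inferInstance
    exact ⟨IsDomain.of_bot_isPrime R, [], by simp⟩
  | succ d ih =>
    intro R _ _ _ hdim s hs hsm
    have hmin : maximalIdeal R ∉ minimalPrimes R := by
      intro h
      rw [← Ideal.height_eq_zero_iff] at h
      rw [← maximalIdeal_height_eq_ringKrullDim, h] at hdim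
      norm_cast at hdim
    obtain ⟨x, hx, hx2, hxp⟩ : ∃ x ∈ maximalIdeal R, x ∉ maximalIdeal R * maximalIdeal R ∧
        ∀ p ∈ minimalPrimes R, x ∉ p := by
      by_contra! h
      have hfin := minimalPrimes.finite_of_isNoetherianRing R
      have hsub : ((maximalIdeal R : Ideal R) : Set R) ⊆
          ((maximalIdeal R * maximalIdeal R : Ideal R) : Set R) ∪
          ((maximalIdeal R * maximalIdeal R : Ideal R) : Set R) ∪
            ⋃ p ∈ (hfin.toFinset : Set (Ideal R)), (p : Set R) := by
        intro x hx
        by_cases hx2 : x ∈ maximalIdeal R * maximalIdeal R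
        · exact Or.inl (Or.inl hx2)
        · obtain ⟨p, hp, hxp⟩ := h x hx hx2
          exact Or.inr (Set.mem_biUnion (by simpa using hp) hxp)
      have hm2 : ¬ maximalIdeal R ≤ maximalIdeal R * maximalIdeal R := by
        intro hle
        have hb : maximalIdeal R = ⊥ :=
          Submodule.eq_bot_of_le_smul_of_le_jacobson_bot (maximalIdeal R) _
            (IsNoetherian.noetherian _) hle (maximalIdeal_le_jacobson _)
        refine hmin ⟨⟨inferInstance, bot_le⟩, fun q _ _ ↦ ?_⟩
        rw [hb]
        exact bot_le
      rcases (Ideal.subset_union_prime' (f := id) (a := maximalIdeal R * maximalIdeal R)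
        (b := maximalIdeal R * maximalIdeal R) fun p hp ↦ by
          have hp' : p ∈ minimalPrimes R := by simpa using hp
          exact hp'.1.1).mp hsub with h | h | ⟨p, hp, h⟩
      · exact hm2 h
      · exact hm2 h
      · have hp' : p ∈ minimalPrimes R := by simpa using hp
        have := hp'.1.1
        exact hmin ((le_antisymm h (le_maximalIdeal this.ne_top)) ▸ hp')
    have hne : Ideal.span {x} ≠ ⊤ := by simpa [Ideal.span_singleton_eq_top] using hx
    have : Nontrivial (R ⧸ Ideal.span {x}) := Ideal.Quotient.nontrivial_iff.mpr hne
    have hsurj := Ideal.Quotient.mk_surjective (I := Ideal.span {x})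
    have : IsLocalRing (R ⧸ Ideal.span {x}) := .of_surjective' _ hsurj
    obtain ⟨t, ht, htm⟩ := Ideal.exists_finset_span_eq_map_of_mem_span hsm hx hx2
    have hmap : (maximalIdeal R).map (Ideal.Quotient.mk (Ideal.span {x})) = maximalIdeal _ := by
      exact IsLocalRing.map_maximalIdeal_of_surjective _ hsurj
    obtain ⟨hdom, rs, hlen, hrs, hreg⟩ := ih (R ⧸ Ideal.span {x}) (by
      have := maximalIdeal_height_eq_ringKrullDim (R := R) ▸
        Ideal.height_le_ringKrullDim_quotient_add_one hx
      have := hdim.trans this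
      rw [Nat.cast_add, Nat.cast_one] at this
      exact (ENat.WithBot.add_le_add_one_right_iff).mp this) t (by omega) (htm.trans hmap)
    have hR := isDomain_of_isPrime_span_singleton hx
      ((Ideal.Quotient.isDomain_iff_prime _).mp hdom) hxp
    refine ⟨hR, ?_⟩
    have hx0 : x ≠ 0 := by rintro rfl; exact hx2 (zero_mem _)
    obtain ⟨rs, rfl⟩ := List.map_surjective_iff.mpr hsurj rs
    refine ⟨x :: rs, by simpa using hlen, ?_, ?_⟩
    · simp only [List.mem_cons, forall_eq_or_imp, hx, true_and]
      intro r hr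
      have := hrs _ (List.mem_map_of_mem hr)
      rw [mem_maximalIdeal, mem_nonunits_iff] at this ⊢
      exact fun h ↦ this (h.map _)
    · rw [RingTheory.Sequence.isWeaklyRegular_cons_iff]
      refine ⟨IsSMulRegular.of_ne_zero hx0, ?_⟩
      have h1 : RingTheory.Sequence.IsWeaklyRegular (R ⧸ Ideal.span {x}) rs :=
        (RingTheory.Sequence.isWeaklyRegular_map_algebraMap_iff (S := R ⧸ Ideal.span {x})
          (R ⧸ Ideal.span {x}) rs).mp hreg
      refine (LinearEquiv.isWeaklyRegular_congr (Submodule.quotEquivOfEq _ _ ?_) rs).mp h1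
      rw [← Submodule.ideal_span_singleton_smul, smul_eq_mul, Ideal.mul_top]

namespace CategoryTheory.ProjectiveResolution
open Abelian
variable {C : Type*} [Category* C] [Abelian C] {X : C} (P : ProjectiveResolution X)

theorem subsingleton_ext_iff [HasExt C] (Y : C) (n : ℕ) :
    Subsingleton (Abelian.Ext X Y (n + 1)) ↔ ∀ f : P.complex.X (n + 1) ⟶ Y,
      P.complex.d (n + 2) (n + 1) ≫ f = 0 → ∃ g, P.complex.d (n + 1) n ≫ g = f := by
  refine ⟨fun h f hf ↦ ?_, fun h ↦ subsingleton_of_forall_eq 0 fun α ↦ ?_⟩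
  · exact (P.extMk_eq_zero_iff f (n + 2) rfl hf n rfl).mp (Subsingleton.elim _ _)
  · obtain ⟨f, hf, rfl⟩ := P.extMk_surjective α (n + 2) rfl
    exact (P.extMk_eq_zero_iff f (n + 2) rfl hf n rfl).mpr (h f hf)

theorem subsingleton_linearExt_iff (R : Type*) [Ring R] [Linear R C] [EnoughProjectives C]
    (Y : C) (n : ℕ) :
    Subsingleton (((_root_.Ext R C (n + 1)).obj (Opposite.op X)).obj Y) ↔
      ∀ f : P.complex.X (n + 1) ⟶ Y,
        P.complex.d (n + 2) (n + 1) ≫ f = 0 → ∃ g, P.complex.d (n + 1) n ≫ g = f := by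
  rw [(P.isoExt (R := R) (n + 1) Y).toLinearEquiv.toEquiv.subsingleton_congr,
    ← ModuleCat.isZero_iff_subsingleton, ← HomologicalComplex.exactAt_iff_isZero_homology,
    HomologicalComplex.exactAt_iff' _ n (n + 1) (n + 2) (by simp) (by simp),
    ShortComplex.moduleCat_exact_iff]
  rfl

end CategoryTheory.ProjectiveResolution

theorem pdLE_iff_hasProjectiveDimensionLE {Λ : Type} [Ring Λ] (M : ModuleCat Λ) (n : ℕ) :
    pdLE Λ M n ↔ HasProjectiveDimensionLE M n := by
  have P := projectiveResolution M
  simp only [pdLE, HasProjectiveDimensionLE, hasProjectiveDimensionLT_iff, Nat.lt_iff_add_one_le]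
  have key (N : ModuleCat Λ) (i : ℕ) :
      Subsingleton (((Ext ℤ (ModuleCat Λ) (i + 1)).obj (Opposite.op M)).obj N) ↔
        Subsingleton (Abelian.Ext M N (i + 1)) := by
    rw [P.subsingleton_linearExt_iff, P.subsingleton_ext_iff]
  constructor
  · intro h i hi N e
    obtain ⟨i, rfl⟩ := Nat.exists_eq_add_one_of_ne_zero (by omega : i ≠ 0)
    have := (key N i).mp (h N _ hi)
    exact Subsingleton.elim _ _
  · intro h N i hi
    obtain ⟨i, rfl⟩ := Nat.exists_eq_add_one_of_ne_zero (by omega : i ≠ 0)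
    exact (key N i).mpr (subsingleton_of_forall_eq 0 fun e ↦ h _ hi e)

universe u

section

open Abelian
open scoped Pointwise ModuleCat.Algebra

variable {R Λ : Type u} [CommRing R] [IsNoetherianRing R] [IsLocalRing R] [Ring Λ] [Algebra R Λ]
  [Module.Finite R Λ]

theorem ModuleCat.exists_shortExact_finite {Λ : Type u} [Ring Λ] [IsNoetherianRing Λ]
    (M : ModuleCat.{u} Λ) [Module.Finite Λ M] :
    ∃ S : ShortComplex (ModuleCat.{u} Λ), S.ShortExact ∧ S.X₃ = M ∧ Projective S.X₂ ∧
      Module.Finite Λ S.X₁ ∧ Module.Finite Λ S.X₂ := by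
  obtain ⟨_, f, hf⟩ := Module.Finite.exists_fin' Λ M
  exact ⟨f.shortComplexKer, LinearMap.shortExact_shortComplexKer hf, rfl,
    inferInstance, inferInstance, inferInstance⟩

theorem CategoryTheory.ShortComplex.ShortExact.exists_extClass_comp_eq {C : Type*} [Category* C]
    [Abelian C] [HasExt C] {S : ShortComplex C} (hS : S.ShortExact) [Projective S.X₂] {Y : C}
    {n : ℕ} (e : Ext S.X₃ Y (n + 1)) :
    ∃ e' : Ext S.X₁ Y n, hS.extClass.comp e' (add_comm _ _) = e :=
  Ext.contravariant_sequence_exact₃ hS Y e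
    (have := Ext.subsingleton_of_projective S.X₂ Y n; Subsingleton.elim _ _) (add_comm _ _)

theorem CategoryTheory.ShortComplex.ShortExact.extClass_comp_injective {C : Type*} [Category* C]
    [Abelian C] [HasExt C] {S : ShortComplex C} (hS : S.ShortExact) [Projective S.X₂] {Y : C}
    {n : ℕ} {e : Ext S.X₁ Y (n + 1)}
    (he : hS.extClass.comp e (add_comm _ _) = (0 : Ext S.X₃ Y (n + 2))) : e = 0 := by
  obtain ⟨e', rfl⟩ := Ext.contravariant_sequence_exact₁ hS Y e (add_comm _ _) he
  have := Ext.subsingleton_of_projective S.X₂ Y n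
  rw [Subsingleton.elim e' 0, Ext.comp_zero]

theorem LinearMap.bijective_one_sub_smul {K : Type*} [AddCommGroup K] [Module R K]
    [Module.Finite R K] {x : R} (hx : x ∈ maximalIdeal R) (f : K →ₗ[R] K) :
    Function.Bijective (1 - x • f : K →ₗ[R] K) := by
  have hs : Function.Surjective (1 - x • f : K →ₗ[R] K) := by
    rw [← LinearMap.range_eq_top, eq_top_iff]
    refine Submodule.le_of_le_smul_of_le_jacobson_bot (I := maximalIdeal R) Module.Finite.fg_top
      (maximalIdeal_le_jacobson _) fun y _ ↦ ?_
    have : y = (1 - x • f : K →ₗ[R] K) y + x • f y := by simp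
    rw [this]
    exact Submodule.add_mem_sup (LinearMap.mem_range_self _ _)
      (Submodule.smul_mem_smul hx trivial)
  exact ⟨IsNoetherian.injective_of_surjective_endomorphism _ hs, hs⟩

theorem ModuleCat.hasProjectiveDimensionLT_of_forall_ext_eq_smul {x : R}
    (hx : x ∈ maximalIdeal R) (n : ℕ) (M : ModuleCat.{u} Λ) [Module.Finite Λ M]
    (h : ∀ (N : ModuleCat.{u} Λ) (e : Ext M N n), ∃ e', e = x • e') :
    HasProjectiveDimensionLT M n := by
  have : IsNoetherianRing Λ := isNoetherian_of_tower R inferInstance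
  induction n generalizing M with
  | zero =>
    obtain ⟨e', he'⟩ := h M (Ext.mk₀ (𝟙 M))
    obtain ⟨g, rfl⟩ := (Ext.mk₀_bijective M M).2 e'
    rw [← Ext.mk₀_smul, (Ext.mk₀_bijective _ _).1.eq_iff] at he'
    have : Module.Finite R M := .trans Λ M
    have : Subsingleton M := by
      have hb : (⊤ : Submodule R M) = ⊥ := by
        refine Submodule.eq_bot_of_le_smul_of_le_jacobson_bot (maximalIdeal R) _
          Module.Finite.fg_top (fun y _ ↦ ?_) (maximalIdeal_le_jacobson _)
        have : y = x • g y := congr($he' y)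
        rw [this]
        exact Submodule.smul_mem_smul hx trivial
      exact (Submodule.subsingleton_iff R).mp (subsingleton_of_bot_eq_top hb.symm)
    exact (ModuleCat.isZero_of_subsingleton M).hasProjectiveDimensionLT_zero
  | succ n hn =>
    obtain ⟨S, hS, rfl, _, _, _⟩ := M.exists_shortExact_finite
    match n with
    | 0 =>
      simp only [zero_add, ← projective_iff_hasProjectiveDimensionLT_one]
      obtain ⟨e', he'⟩ := h S.X₁ hS.extClass
      obtain ⟨t, rfl⟩ := hS.exists_extClass_comp_eq e'
      obtain ⟨t, rfl⟩ := (Ext.mk₀_bijective _ _).2 t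
      have hK : Module.Finite R S.X₁ := .trans Λ _
      have hb := LinearMap.bijective_one_sub_smul hx (t.hom.restrictScalars R)
      obtain ⟨u, hu, hut⟩ : ∃ u : S.X₁ ⟶ S.X₁, Ext.mk₀ u = x • Ext.mk₀ t ∧ ∀ y, u y = x • t y :=
        ⟨_, Ext.mk₀_smul x t, fun _ ↦ rfl⟩
      have hiso : IsIso (𝟙 S.X₁ - u) :=
        (ConcreteCategory.isIso_iff_bijective _).mpr (by convert hb; ext; simp [hut])
      have h0 : hS.extClass.comp (Ext.mk₀ (𝟙 S.X₁ - u)) (add_zero 1) = 0 := by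
        rw [sub_eq_add_neg, Ext.mk₀_add, Ext.mk₀_neg, Ext.comp_add, Ext.comp_neg, hu,
          Ext.comp_smul, ← he', Ext.comp_mk₀_id, add_neg_cancel]
      have h1 : hS.extClass = 0 := by
        rw [← hS.extClass.comp_mk₀_id, ← IsIso.hom_inv_id (𝟙 S.X₁ - u), ← Ext.mk₀_comp_mk₀,
          ← Ext.comp_assoc_of_third_deg_zero, h0, Ext.zero_comp]
      obtain ⟨f', hf'⟩ := Ext.covariant_sequence_exact₃ S.X₃ hS (Ext.mk₀ (𝟙 S.X₃)) (zero_add 1)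
        (by rw [h1, Ext.comp_zero])
      obtain ⟨f, rfl⟩ := (Ext.mk₀_bijective S.X₃ S.X₂).2 f'
      rw [Ext.mk₀_comp_mk₀, (Ext.mk₀_bijective _ _).1.eq_iff] at hf'
      exact (Retract.mk f S.g hf').projective
    | n + 1 =>
      rw [hS.hasProjectiveDimensionLT_X₃_iff n inferInstance]
      refine hn S.X₁ fun N e ↦ ?_
      obtain ⟨e', he'⟩ := h N (hS.extClass.comp e (add_comm _ _))
      obtain ⟨e', rfl⟩ := hS.exists_extClass_comp_eq e'
      refine ⟨e', sub_eq_zero.mp (hS.extClass_comp_injective ?_)⟩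
      rw [sub_eq_add_neg, Ext.comp_add, Ext.comp_neg, Ext.comp_smul, he', add_neg_cancel]

/-- The short complex `M ⟶ M ⟶ M / xM` of modules over an algebra given by multiplication by a
scalar `x` of the base ring. -/
abbrev ModuleCat.algebraSMulShortComplex (M : ModuleCat.{u} Λ) (x : R) :
    ShortComplex (ModuleCat.{u} Λ) where
  f := x • 𝟙 M
  g := ModuleCat.ofHom (LinearMap.range (x • 𝟙 M : M ⟶ M).hom).mkQ
  zero := by
    ext m
    exact (Submodule.Quotient.mk_eq_zero _).mpr (LinearMap.mem_range_self _ _)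

omit [IsNoetherianRing R] [IsLocalRing R] [Module.Finite R Λ] in
theorem ModuleCat.shortExact_algebraSMulShortComplex {M : ModuleCat.{u} Λ} {x : R}
    (hx : IsSMulRegular M x) : (M.algebraSMulShortComplex x).ShortExact where
  exact := (ShortComplex.ShortExact.moduleCat_exact_iff_function_exact _).mpr
    (LinearMap.exact_map_mkQ_range _)
  mono_f := (ModuleCat.mono_iff_injective _).mpr hx
  epi_g := (ModuleCat.epi_iff_surjective _).mpr (Submodule.mkQ_surjective _)

/-- The cokernel of multiplication by `x`, as a module over the base ring. -/
def ModuleCat.quotSMulTopEquiv (M : ModuleCat.{u} Λ) (x : R) :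
    QuotSMulTop x M ≃ₗ[R] (M.algebraSMulShortComplex x).X₃ :=
  Submodule.quotEquivOfEq (x • (⊤ : Submodule R M))
    ((LinearMap.range (x • 𝟙 M : M ⟶ M).hom).restrictScalars R) (by
      ext m
      simp [Submodule.mem_smul_pointwise_iff_exists]) ≪≫ₗ
  Submodule.Quotient.restrictScalarsEquiv R (LinearMap.range (x • 𝟙 M : M ⟶ M).hom)

theorem ModuleCat.hasProjectiveDimensionLT_of_isSMulRegular {M : ModuleCat.{u} Λ}
    [Module.Finite Λ M] {x : R} (hx : x ∈ maximalIdeal R) (hreg : IsSMulRegular M x) {n : ℕ}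
    (h : HasProjectiveDimensionLT (M.algebraSMulShortComplex x).X₃ (n + 1)) :
    HasProjectiveDimensionLT M n := by
  refine hasProjectiveDimensionLT_of_forall_ext_eq_smul hx n M fun N e ↦ ?_
  obtain ⟨e', he'⟩ := Ext.contravariant_sequence_exact₁ (shortExact_algebraSMulShortComplex hreg)
    N e (add_comm 1 n) (Ext.eq_zero_of_hasProjectiveDimensionLT _ (n + 1) le_rfl)
  refine ⟨e', he'.symm.trans ?_⟩
  have hsmul : Ext.mk₀ (x • 𝟙 M) = x • Ext.mk₀ (𝟙 M) := Ext.mk₀_smul x _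
  simp only [algebraSMulShortComplex]
  rw [hsmul, Ext.smul_comp, Ext.mk₀_id_comp]

theorem ModuleCat.add_length_le_of_isWeaklyRegular {d : ℕ}
    (hd : ∀ M : ModuleCat.{u} Λ, HasProjectiveDimensionLE M d) (rs : List R) :
    ∀ (M : ModuleCat.{u} Λ) [Module.Finite Λ M] (n : ℕ), ¬ HasProjectiveDimensionLT M n →
    (∀ r ∈ rs, r ∈ maximalIdeal R) → RingTheory.Sequence.IsWeaklyRegular M rs →
    n + rs.length ≤ d := by
  induction rs with
  | nil =>
    intro M _ n hn _ _
    by_contra! h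
    have := hd M
    exact hn (hasProjectiveDimensionLT_of_ge M (d + 1) n h)
  | cons x rs ih =>
    intro M _ n hn hmem hreg
    rw [RingTheory.Sequence.isWeaklyRegular_cons_iff] at hreg
    have := ih (M.algebraSMulShortComplex x).X₃ (n + 1)
      (fun h ↦ hn (hasProjectiveDimensionLT_of_isSMulRegular (hmem x (by simp)) hreg.1 h))
      (fun r hr ↦ hmem r (by simp [hr]))
      ((LinearEquiv.isWeaklyRegular_congr (M.quotSMulTopEquiv x) rs).mp hreg.2)
    simp only [List.length_cons]
    omega

variable [Module.Free R Λ]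

omit [IsNoetherianRing R] [IsLocalRing R] [Module.Finite R Λ] in
variable (R Λ) in
theorem Module.Projective.restrictScalars_of_free (M : Type*) [AddCommGroup M] [Module R M]
    [Module Λ M] [IsScalarTower R Λ M] [Module.Projective Λ M] : Module.Projective R M := by
  obtain ⟨s, hs⟩ := Module.projective_def'.mp ‹Module.Projective Λ M›
  exact .of_split (s.restrictScalars R) ((Finsupp.linearCombination Λ id).restrictScalars R)
    (LinearMap.ext fun m ↦ congr($hs m))

theorem CategoryTheory.Limits.IsZero.subsingleton_ext {C : Type*} [Category* C] [Abelian C]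
    [HasExt C] {Y : C} (hY : Limits.IsZero Y) (X : C) (n : ℕ) : Subsingleton (Ext X Y n) :=
  subsingleton_of_forall_eq 0 fun e ↦ by
    rw [← e.comp_mk₀_id, hY.eq_zero_of_src (𝟙 _), Ext.mk₀_zero, Ext.comp_zero]

theorem CategoryTheory.ShortComplex.ShortExact.map_restrictScalars {A B : Type*} [Ring A] [Ring B]
    (f : A →+* B) {S : ShortComplex (ModuleCat.{u} B)} (hS : S.ShortExact) :
    (S.map (ModuleCat.restrictScalars f)).ShortExact where
  exact := (ShortComplex.ShortExact.moduleCat_exact_iff_function_exact _).mpr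
    ((ShortComplex.ShortExact.moduleCat_exact_iff_function_exact S).mp hS.exact)
  mono_f := (ModuleCat.mono_iff_injective _).mpr hS.moduleCat_injective_f
  epi_g := (ModuleCat.epi_iff_surjective _).mpr hS.moduleCat_surjective_g

theorem subsingleton_ext_restrictScalars_of_hasProjectiveDimensionLT {rs : List R}
    (hmem : ∀ r ∈ rs, r ∈ maximalIdeal R) (hrs : RingTheory.Sequence.IsWeaklyRegular R rs)
    (N : ModuleCat.{u} R) [Module.Finite R N]
    (hN : Module.support R N ⊆ PrimeSpectrum.zeroLocus (maximalIdeal R)) (n : ℕ) :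
    ∀ (M : ModuleCat.{u} Λ) [Module.Finite Λ M], HasProjectiveDimensionLT M n →
    ∀ i, i + n ≤ rs.length →
      Subsingleton (Ext N ((ModuleCat.restrictScalars (algebraMap R Λ)).obj M) i) := by
  have : IsNoetherianRing Λ := isNoetherian_of_tower R inferInstance
  have h1 (M : ModuleCat.{u} Λ) [Module.Finite Λ M] [Projective M] (i : ℕ) (hi : i < rs.length) :
      Subsingleton (Ext N ((ModuleCat.restrictScalars (algebraMap R Λ)).obj M) i) := by
    let _ : Module R M := Module.compHom M (algebraMap R Λ)
    have hproj : Module.Projective R M :=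
      have : Module.Projective Λ M := (IsProjective.iff_projective _).mpr ‹_›
      .restrictScalars_of_free R Λ M
    have hfin : Module.Finite R ((ModuleCat.restrictScalars (algebraMap R Λ)).obj M) :=
      (.trans Λ M : Module.Finite R M)
    have hreg : RingTheory.Sequence.IsWeaklyRegular M rs :=
      (LinearEquiv.isWeaklyRegular_congr (TensorProduct.lid R M) rs).mp
        (hrs.isWeaklyRegular_rTensor)
    rcases subsingleton_or_nontrivial ((ModuleCat.restrictScalars (algebraMap R Λ)).obj M)
      with hM | hM
    · exact (ModuleCat.isZero_of_subsingleton
        ((ModuleCat.restrictScalars (algebraMap R Λ)).obj M)).subsingleton_ext N i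
    · exact ModuleCat.subsingleton_ext_of_exists_isRegular (maximalIdeal R) N hN
        ((ModuleCat.restrictScalars (algebraMap R Λ)).obj M)
        (Submodule.top_ne_ideal_smul_of_le_jacobson_annihilator
          (maximalIdeal_le_jacobson _)).symm.lt_top rs hmem
        (.of_isWeaklyRegular_of_mem_maximalIdeal
          ((ModuleCat.restrictScalars (algebraMap R Λ)).obj M) hmem hreg) i hi
  induction n with
  | zero =>
    intro M _ hM i _
    have hM0 := (ModuleCat.restrictScalars (algebraMap R Λ)).map_isZero
      (isZero_of_hasProjectiveDimensionLT_zero M)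
    exact hM0.subsingleton_ext N i
  | succ n ih =>
    intro M _ hM i hi
    obtain _ | n := n
    · rw [zero_add, ← projective_iff_hasProjectiveDimensionLT_one] at hM
      exact h1 M i (by omega)
    · obtain ⟨S, hS, rfl, _, _, _⟩ := M.exists_shortExact_finite
      rw [hS.hasProjectiveDimensionLT_X₃_iff n inferInstance] at hM
      have hS' := hS.map_restrictScalars (algebraMap R Λ)
      refine subsingleton_of_forall_eq 0 fun e ↦ ?_
      obtain ⟨e', rfl⟩ := Ext.covariant_sequence_exact₃ N hS' e rfl
        (@Subsingleton.elim _ (ih S.X₁ hM (i + 1) (by omega)) _ _)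
      obtain rfl : e' = 0 := @Subsingleton.elim _ (h1 S.X₂ i (by omega)) _ _
      exact Ext.zero_comp ..

end

/-- Auslander–Buchsbaum formula for regular algebras: let `R` be a complete regular
local ring of Krull dimension `d` and `Λ` a regular `R`-algebra (finitely generated free
as an `R`-module, with centre `R` and global dimension `d = dim R`). Then for every
finitely generated `Λ`-module `M`, `depth_R M + pd_Λ M = dim R`. -/
theorem stmt11 (R : Type) [CommRing R] [IsNoetherianRing R] [IsLocalRing R]
    (hcomplete : IsAdicComplete (maximalIdeal R) R)
    (d : ℕ) (hdim : ringKrullDim R = d)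
    (hregular : ∃ s : Finset R, s.card = d ∧ Ideal.span (s : Set R) = maximalIdeal R)
    (Λ : Type) [Ring Λ] [Algebra R Λ] [Module.Finite R Λ] [Module.Free R Λ]
    (hcenter : Subalgebra.center R Λ = ⊥)
    (hinj : Function.Injective (algebraMap R Λ))
    (hgl_le : ∀ M : ModuleCat Λ, pdLE Λ M d)
    (hgl_eq : 0 < d → ∃ M : ModuleCat Λ, ¬ pdLE Λ M (d - 1))
    (M : ModuleCat Λ) (hM : Module.Finite Λ M) (hM0 : Nontrivial M) :
    rDepthOver R Λ M + projDim Λ M = d := by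
  classical
  obtain ⟨s, hs, hsm⟩ := hregular
  obtain ⟨-, rs, hlen, hmem, hrs⟩ :=
    exists_isWeaklyRegular_of_le_ringKrullDim d R hdim.ge s hs.le hsm
  have hd (N : ModuleCat Λ) : HasProjectiveDimensionLE N d :=
    (pdLE_iff_hasProjectiveDimensionLE N d).mp (hgl_le N)
  have hex : ∃ n, HasProjectiveDimensionLE M n := ⟨d, hd M⟩
  have hproj : projDim Λ M = Nat.find hex := by
    simp only [projDim, pdLE_iff_hasProjectiveDimensionLE]
    exact Nat.sInf_def hex
  obtain ⟨p, hp⟩ : ∃ p, p = Nat.find hex := ⟨_, rfl⟩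
  have hpM : HasProjectiveDimensionLE M p := hp ▸ Nat.find_spec hex
  have hpd : p ≤ d := hp ▸ Nat.find_min' hex (hd M)
  have hpM' : ¬ HasProjectiveDimensionLT M p := by
    obtain _ | q := p
    · rw [hasProjectiveDimensionLT_zero_iff_isZero, ModuleCat.isZero_iff_subsingleton]
      exact not_subsingleton M
    · exact Nat.find_min hex (by omega)
  have hdepth : rDepthOver R Λ M = d - p := by
    let _ : Module R M := Module.compHom M (algebraMap R Λ)
    refine IsGreatest.csSup_eq ⟨?_, ?_⟩
    · have hfin : Module.Finite R ((ModuleCat.restrictScalars (algebraMap R Λ)).obj M) :=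
        (have : IsScalarTower R Λ M := .of_algebraMap_smul fun _ _ ↦ rfl
        .trans Λ M : Module.Finite R M)
      have : Nontrivial ((ModuleCat.restrictScalars (algebraMap R Λ)).obj M) := hM0
      have hsupp : Module.support R (R ⧸ maximalIdeal R) =
          PrimeSpectrum.zeroLocus (maximalIdeal R) := by
        rw [Module.support_eq_zeroLocus, Ideal.annihilator_quotient]
      exact ModuleCat.exists_isRegular_of_exists_subsingleton_ext (maximalIdeal R) (d - p)
        ((ModuleCat.restrictScalars (algebraMap R Λ)).obj M)
        (Submodule.top_ne_ideal_smul_of_le_jacobson_annihilator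
          (maximalIdeal_le_jacobson _)).symm.lt_top
        (ModuleCat.of R (R ⧸ maximalIdeal R)) hsupp fun i hi ↦
          subsingleton_ext_restrictScalars_of_hasProjectiveDimensionLT hmem hrs _ hsupp.le
            (p + 1) M hpM i (by omega)
    · rintro _ ⟨rs, rfl, hmem, hreg⟩
      have := ModuleCat.add_length_le_of_isWeaklyRegular hd rs M p hpM' hmem hreg.1
      omega
  rw [hdepth, hproj, ← hp, Nat.sub_add_cancel hpd]
end
end

section
/- Let G = μ_{ab} ×_{μ_a} μ_{ac} be a finite abelian fibered product of cyclic groups (with respect to fixed surjections μ_{ab} → μ_a and μ_{ac} → μ_a). Then the Schur multiplier H²(G, ℂ*) is isomorphic to a cyclic group of order gcd(b, c). -/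
/-- The fibre product `μ_{ab} ×_{μ_a} μ_{ac}` with respect to surjections
`f : μ_{ab} → μ_a`, `g : μ_{ac} → μ_a`, written additively as a subgroup of
`ℤ/ab × ℤ/ac`. -/
def fibreProd (a b c : ℕ) (f : ZMod (a * b) →+ ZMod a) (g : ZMod (a * c) →+ ZMod a) :
    AddSubgroup (ZMod (a * b) × ZMod (a * c)) :=
  ((f.comp (AddMonoidHom.fst _ _)) - (g.comp (AddMonoidHom.snd _ _))).ker

theorem cocycle_zero_left {A G : Type*} [AddCommGroup A] [AddCommGroup G] {F : G → G → A}
    (hF : ∀ g h j, F (g + h) j + F g h = F h j + F g (h + j)) (g : G) : F 0 g = F 0 0 := by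
  have := hF 0 0 g
  simp only [zero_add] at this
  exact (add_left_cancel this).symm

/-- The product `A × G`, with the addition twisted by `F : G → G → A`. -/
@[ext]
structure SymmTwist {A G : Type*} [AddCommGroup A] [AddCommGroup G] (F : G → G → A) where
  fst : A
  snd : G

namespace SymmTwist

variable {A G : Type*} [AddCommGroup A] [AddCommGroup G] {F : G → G → A}

instance : Add (SymmTwist F) := ⟨fun x y => ⟨x.fst + y.fst + F x.snd y.snd, x.snd + y.snd⟩⟩
instance : Zero (SymmTwist F) := ⟨⟨-F 0 0, 0⟩⟩
instance : Neg (SymmTwist F) := ⟨fun x => ⟨-x.fst - F (-x.snd) x.snd - F 0 0, -x.snd⟩⟩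

@[simp] lemma fst_add (x y : SymmTwist F) : (x + y).fst = x.fst + y.fst + F x.snd y.snd := rfl
@[simp] lemma snd_add (x y : SymmTwist F) : (x + y).snd = x.snd + y.snd := rfl
@[simp] lemma fst_zero : (0 : SymmTwist F).fst = -F 0 0 := rfl
@[simp] lemma snd_zero : (0 : SymmTwist F).snd = 0 := rfl
@[simp] lemma fst_neg (x : SymmTwist F) : (-x).fst = -x.fst - F (-x.snd) x.snd - F 0 0 := rfl
@[simp] lemma snd_neg (x : SymmTwist F) : (-x).snd = -x.snd := rfl

/-- The abelian extension of `G` by `A` defined by a symmetric 2-cocycle. -/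
abbrev addCommGroup (hF : ∀ g h j, F (g + h) j + F g h = F h j + F g (h + j))
    (hs : ∀ g h, F g h = F h g) : AddCommGroup (SymmTwist F) :=
  have h0 := cocycle_zero_left hF
  have hcomm : ∀ x y : SymmTwist F, x + y = y + x := fun x y => by
    ext
    · simp [hs x.snd, add_comm]
    · simp [add_comm]
  have hzero : ∀ x : SymmTwist F, 0 + x = x := fun x => by
    ext <;> simp [h0]
  { add_assoc := fun x y z => by
      ext
      · have := hF x.snd y.snd z.snd
        simp only [fst_add, snd_add]
        grind
      · simp [add_assoc]
    zero_add := hzero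
    add_zero := fun x => (hcomm x 0).trans (hzero x)
    add_comm := hcomm
    neg_add_cancel := fun x => by
      ext
      · simp only [fst_add, fst_neg, snd_neg, fst_zero]; abel
      · simp
    nsmul := nsmulRec
    zsmul := zsmulRec }

end SymmTwist

theorem exists_eq_add_sub_of_symm {A G : Type*} [AddCommGroup A] [AddCommGroup G]
    [DivisibleBy A ℤ] {F : G → G → A}
    (hF : ∀ g h j, F (g + h) j + F g h = F h j + F g (h + j))
    (hs : ∀ g h, F g h = F h g) : ∃ x : G → A, ∀ g h, F g h = x h - x (g + h) + x g := by
  let := SymmTwist.addCommGroup hF hs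
  have h0 := cocycle_zero_left hF
  let i : A →+ SymmTwist F := AddMonoidHom.mk' (fun a => ⟨a - F 0 0, 0⟩) fun a b => by
    ext
    · simp only [SymmTwist.fst_add]; abel
    · simp
  have hi : Function.Injective i := fun a b h => by
    simpa [i] using congrArg SymmTwist.fst h
  obtain ⟨r, hr⟩ := (Module.Baer.of_divisible A).extension_property_addMonoidHom i hi (.id A)
  have hr' (a : A) : r ⟨a - F 0 0, 0⟩ = a := DFunLike.congr_fun hr a
  refine ⟨fun g => r ⟨0, g⟩, fun g h => ?_⟩
  have key : (⟨0, g⟩ + ⟨0, h⟩ : SymmTwist F) = ⟨F g h - F 0 0, 0⟩ + ⟨0, g + h⟩ := by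
    ext
    · simp [h0]
    · simp
  have := congrArg r key
  rw [map_add, map_add, hr'] at this
  rw [sub_add_eq_add_sub, add_comm (r _), this, add_sub_cancel_right]

/-- The commutator pairing of a 2-cocycle on an abelian group with trivial action. -/
def commutatorPairing {A G : Type*} [AddCommGroup A] [AddCommGroup G] (F : G → G → A)
    (hF : ∀ g h j, F (g + h) j + F g h = F h j + F g (h + j)) : G →+ G →+ A :=
  have key : ∀ g h j, F (g + h) j - F j (g + h) = F g j - F j g + (F h j - F j h) := fun g h j => by
    have h1 := hF g h j
    have h2 := hF j g h
    have h3 := hF g j h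
    rw [add_comm h j] at h1
    rw [add_comm j g] at h2
    grind
  AddMonoidHom.mk' (fun g => AddMonoidHom.mk' (fun h => F g h - F h g) fun h j => by
    have := key h j g
    rw [← neg_inj, neg_sub, this]; abel) fun g h => by ext j; exact key g h j

theorem commutatorPairing_apply {A G : Type*} [AddCommGroup A] [AddCommGroup G] (F : G → G → A)
    (hF : ∀ g h j, F (g + h) j + F g h = F h j + F g (h + j)) (g h : G) :
    commutatorPairing F hF g h = F g h - F h g := rfl

theorem exists_addMonoidHom_of_generators {G : Type*} [AddCommGroup G] (d : ℕ) {s t : G}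
    (hgen : ∀ g : G, ∃ m k : ℤ, g = m • s + k • t)
    (hind : ∀ m k : ℤ, m • s + k • t = 0 → (d : ℤ) ∣ m ∧ (d : ℤ) ∣ k) :
    ∃ p q : G →+ ZMod d, p s = 1 ∧ p t = 0 ∧ q s = 0 ∧ q t = 1 := by
  let ψ : ℤ × ℤ →+ G := ((zmultiplesHom G) s).coprod ((zmultiplesHom G) t)
  have hψ (x : ℤ × ℤ) : ψ x = x.1 • s + x.2 • t := by simp [ψ]
  have hsurj : Function.Surjective ψ := fun g => by
    obtain ⟨m, k, rfl⟩ := hgen g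
    exact ⟨(m, k), hψ _⟩
  have key (π : ℤ × ℤ →+ ZMod d) (hπ : ψ.ker ≤ π.ker) :
      ∃ p : G →+ ZMod d, p s = π (1, 0) ∧ p t = π (0, 1) := by
    refine ⟨AddMonoidHom.liftOfSurjective ψ hsurj ⟨π, hπ⟩, ?_, ?_⟩
    · rw [← ψ.liftOfRightInverse_comp_apply _ (Function.rightInverse_surjInv hsurj) ⟨π, hπ⟩]
      simp [hψ]
    · rw [← ψ.liftOfRightInverse_comp_apply _ (Function.rightInverse_surjInv hsurj) ⟨π, hπ⟩]
      simp [hψ]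
  obtain ⟨p, hp⟩ := key ((Int.castAddHom (ZMod d)).comp (AddMonoidHom.fst _ _)) fun x hx => by
    simpa using (ZMod.intCast_zmod_eq_zero_iff_dvd _ _).2 (hind x.1 x.2 (by rw [← hψ]; exact hx)).1
  obtain ⟨q, hq⟩ := key ((Int.castAddHom (ZMod d)).comp (AddMonoidHom.snd _ _)) fun x hx => by
    simpa using (ZMod.intCast_zmod_eq_zero_iff_dvd _ _).2 (hind x.1 x.2 (by rw [← hψ]; exact hx)).2
  exact ⟨p, q, by simpa using hp.1, by simpa using hp.2, by simpa using hq.1, by simpa using hq.2⟩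

theorem nonempty_H2_addEquiv_zmod {A G : Type} [AddCommGroup A] [AddCommGroup G] [DivisibleBy A ℤ] {d : ℕ}
    (ε : ZMod d →+ A) (hε : Function.Injective ε) (hεr : ∀ a : A, d • a = 0 → a ∈ ε.range)
    {s t : G} (hgen : ∀ g : G, ∃ m k : ℤ, g = m • s + k • t)
    (hind : ∀ m k : ℤ, m • s + k • t = 0 → (d : ℤ) ∣ m ∧ (d : ℤ) ∣ k)
    (hd : d • t ∈ AddSubgroup.zmultiples s) :
    Nonempty (groupCohomology (Rep.trivial ℤ (Multiplicative G) A) 2 ≃+ ZMod d) := by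
  let M := Rep.trivial ℤ (Multiplicative G) A
  let toFun (x : groupCohomology.cocycles₂ M) (g h : G) : A := x (.ofAdd g, .ofAdd h)
  have hcoc (x : groupCohomology.cocycles₂ M) (g h j : G) :
      toFun x (g + h) j + toFun x g h = toFun x h j + toFun x g (h + j) :=
    (groupCohomology.mem_cocycles₂_iff _).1 x.2 (.ofAdd g) (.ofAdd h) (.ofAdd j)
  let Φ : groupCohomology.cocycles₂ M →+ A := AddMonoidHom.mk' (fun x => toFun x s t - toFun x t s)
    fun x y => add_sub_add_comm _ _ _ _
  let P : groupCohomology.cocycles₂ M →+ groupCohomology M 2 :=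
    (groupCohomology.H2π M).hom.toAddMonoidHom
  have hP : Function.Surjective P := (ModuleCat.epi_iff_surjective _).1 inferInstance
  have hker : P.ker = Φ.ker := by
    ext x
    refine (groupCohomology.H2π_eq_zero_iff x).trans ?_
    constructor
    · rintro ⟨y, hy⟩
      have hy' (g h : G) : y (.ofAdd h) - y (.ofAdd (g + h)) + y (.ofAdd g) = toFun x g h :=
        congrFun hy (.ofAdd g, .ofAdd h)
      change toFun x s t - toFun x t s = 0
      rw [← hy', ← hy', add_comm t s]
      abel
    · intro hx
      have hst : commutatorPairing (toFun x) (hcoc x) s t = 0 := hx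
      have hts : commutatorPairing (toFun x) (hcoc x) t s = 0 := by
        rw [← neg_eq_zero, ← hst]
        simp [commutatorPairing_apply]
      have hself (g : G) : commutatorPairing (toFun x) (hcoc x) g g = 0 := sub_self _
      obtain ⟨y, hy⟩ := exists_eq_add_sub_of_symm (hcoc x) fun g h => by
        rw [← sub_eq_zero, ← commutatorPairing_apply _ (hcoc x)]
        obtain ⟨m, k, rfl⟩ := hgen g
        obtain ⟨m', k', rfl⟩ := hgen h
        simp [hst, hts, hself]
      exact ⟨fun g => y g.toAdd, funext fun g => (hy g.1.toAdd g.2.toAdd).symm⟩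
  have hrange : Φ.range = ε.range := by
    apply le_antisymm
    · rintro _ ⟨x, rfl⟩
      apply hεr
      obtain ⟨m, hm⟩ := hd
      change d • commutatorPairing (toFun x) (hcoc x) s t = 0
      rw [← map_nsmul, ← hm, map_zsmul, commutatorPairing_apply, sub_self, smul_zero]
    · rintro _ ⟨z, rfl⟩
      obtain ⟨p, q, hps, hpt, hqs, hqt⟩ := exists_addMonoidHom_of_generators d hgen hind
      refine ⟨⟨fun g => ε (z * (p g.1.toAdd * q g.2.toAdd)), ?_⟩, ?_⟩
      · refine (groupCohomology.mem_cocycles₂_iff _).2 fun g h j => ?_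
        change ε _ + ε _ = ε _ + ε _
        simp only [← map_add, toAdd_mul]
        congr 1
        simp only [map_add]
        ring
      · change ε (z * (p s * q t)) - ε (z * (p t * q s)) = ε z
        simp [hps, hpt, hqt]
  exact ⟨(QuotientAddGroup.quotientKerEquivOfSurjective P hP).symm.trans <|
    (QuotientAddGroup.quotientAddEquivOfEq hker).trans <|
    (QuotientAddGroup.quotientKerEquivRange Φ).trans <|
    (AddEquiv.addSubgroupCongr hrange).trans (AddMonoidHom.ofInjective hε).symm⟩

theorem exists_zmod_addMonoidHom_complex_units (d : ℕ) (hd : d ≠ 0) :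
    ∃ ε : ZMod d →+ Additive ℂˣ, Function.Injective ε ∧
      ∀ a : Additive ℂˣ, d • a = 0 → a ∈ ε.range := by
  have : NeZero d := ⟨hd⟩
  have hζ := (Complex.isPrimitiveRoot_exp d hd).isUnit_unit' hd
  refine ⟨(Subgroup.toAddSubgroup (Subgroup.zpowers _)).subtype.comp
    hζ.zmodEquivZPowers.toAddMonoidHom, ?_, fun a ha => ?_⟩
  · exact Subtype.val_injective.comp hζ.zmodEquivZPowers.injective
  · have : a.toMul ∈ Subgroup.zpowers _ := hζ.zpowers_eq ▸ (mem_rootsOfUnity _ _).2 ha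
    obtain ⟨z, hz⟩ := hζ.zmodEquivZPowers.surjective (.ofMul ⟨a.toMul, this⟩)
    exact ⟨z, congrArg (fun y : Additive (Subgroup.zpowers _) => Additive.ofMul y.toMul.1) hz⟩

theorem exists_zpow_eq_complex_units {n : ℤ} (hn : n ≠ 0) (x : ℂˣ) : ∃ y : ℂˣ, y ^ n = x := by
  have key {m : ℕ} (hm : m ≠ 0) (x : ℂˣ) : ∃ y : ℂˣ, y ^ m = x := by
    obtain ⟨z, hz⟩ := IsAlgClosed.exists_pow_nat_eq (x : ℂ) (Nat.pos_of_ne_zero hm)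
    have hz0 : z ≠ 0 := fun h => x.ne_zero (by rw [← hz, h, zero_pow hm])
    exact ⟨Units.mk0 z hz0, Units.ext (by simpa using hz)⟩
  obtain ⟨m, rfl | rfl⟩ := n.eq_nat_or_neg
  · obtain ⟨y, hy⟩ := key (by simpa using hn) x
    exact ⟨y, by simpa using hy⟩
  · obtain ⟨y, hy⟩ := key (by simpa using hn) x⁻¹
    exact ⟨y, by simp [hy]⟩

theorem addMonoidHom_zmod_apply_intCast {m n : ℕ} (f : ZMod m →+ ZMod n) (k : ℤ) :
    f k = k * f 1 := by
  rw [← zsmul_one, map_zsmul, zsmul_eq_mul]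

theorem isUnit_map_one_of_surjective {m n : ℕ} (f : ZMod m →+ ZMod n)
    (hf : Function.Surjective f) : IsUnit (f 1) := by
  obtain ⟨x, hx⟩ := hf 1
  obtain ⟨k, rfl⟩ := ZMod.intCast_surjective x
  rw [addMonoidHom_zmod_apply_intCast] at hx
  exact IsUnit.of_mul_eq_one_right _ hx

theorem mem_fibreProd_intCast {a b c : ℕ} {f : ZMod (a * b) →+ ZMod a} {g : ZMod (a * c) →+ ZMod a}
    (m n : ℤ) : ((m, n) : ZMod (a * b) × ZMod (a * c)) ∈ fibreProd a b c f g ↔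
      (m : ZMod a) * f 1 = n * g 1 := by
  rw [← addMonoidHom_zmod_apply_intCast, ← addMonoidHom_zmod_apply_intCast, ← sub_eq_zero]
  rfl

/-- There is an integer `w` that is invertible modulo `ac` and such that the fibre product consists
of the pairs `(m, n)` with `n ≡ w m` modulo `a`. -/
theorem exists_int_mem_fibreProd_iff {a b c : ℕ} (ha : 0 < a) (hc : 0 < c)
    {f : ZMod (a * b) →+ ZMod a} {g : ZMod (a * c) →+ ZMod a}
    (hf : Function.Surjective f) (hg : Function.Surjective g) :
    ∃ w w' : ℤ, (a * c : ℤ) ∣ w' * w - 1 ∧ ∀ m n : ℤ,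
      ((m, n) : ZMod (a * b) × ZMod (a * c)) ∈ fibreProd a b c f g ↔ (a : ℤ) ∣ n - w * m := by
  have : NeZero (a * c) := ⟨(Nat.mul_pos ha hc).ne'⟩
  obtain ⟨u, hu⟩ := isUnit_map_one_of_surjective f hf
  obtain ⟨v, hv⟩ := isUnit_map_one_of_surjective g hg
  obtain ⟨W, hW⟩ := ZMod.unitsMap_surjective (Nat.dvd_mul_right a c) (u * v⁻¹)
  obtain ⟨w, hw⟩ := ZMod.intCast_surjective (W : ZMod (a * c))
  obtain ⟨w', hw'⟩ := ZMod.intCast_surjective ((W⁻¹ : (ZMod (a * c))ˣ) : ZMod (a * c))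
  have hwa : (w : ZMod a) * v = u := by
    have h := congrArg Units.val hW
    rw [ZMod.unitsMap_val, ← hw, ZMod.cast_intCast (Nat.dvd_mul_right a c)] at h
    rw [h]
    simp
  refine ⟨w, w', ?_, fun m n => ?_⟩
  · rw [← Nat.cast_mul, ← ZMod.intCast_zmod_eq_zero_iff_dvd]
    push_cast
    rw [hw, hw', Units.inv_mul, sub_self]
  · rw [mem_fibreProd_intCast, ← hu, ← hv, ← ZMod.intCast_zmod_eq_zero_iff_dvd, ← hwa, ← mul_assoc,
      Units.mul_left_inj, Int.cast_sub, Int.cast_mul, sub_eq_zero, mul_comm (m : ZMod a), eq_comm]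

theorem exists_generators_fibreProd {a b c : ℕ} (ha : 0 < a) (hc : 0 < c)
    {f : ZMod (a * b) →+ ZMod a} {g : ZMod (a * c) →+ ZMod a}
    (hf : Function.Surjective f) (hg : Function.Surjective g) :
    ∃ s t : fibreProd a b c f g, (∀ x, ∃ m k : ℤ, x = m • s + k • t) ∧
      (∀ m k : ℤ, m • s + k • t = 0 → (b.gcd c : ℤ) ∣ m ∧ (b.gcd c : ℤ) ∣ k) ∧
      b.gcd c • t ∈ AddSubgroup.zmultiples s := by
  obtain ⟨w, w', hww, hmem⟩ := exists_int_mem_fibreProd_iff (b := b) ha hc hf hg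
  let s : fibreProd a b c f g := ⟨(((1 : ℤ) : ZMod (a * b)), (w : ZMod (a * c))),
    (hmem 1 w).2 (by simp)⟩
  let t : fibreProd a b c f g :=
    ⟨(((0 : ℤ) : ZMod (a * b)), ((a : ℤ) : ZMod (a * c))), (hmem 0 a).2 (by simp)⟩
  have hcomb (m k : ℤ) : ((m • s + k • t : fibreProd a b c f g) : ZMod (a * b) × ZMod (a * c)) =
      ((m : ZMod (a * b)), ((w * m + a * k : ℤ) : ZMod (a * c))) := by
    ext
    · simp [s, t]
    · simp [s, t, mul_comm]
  have hzero (m k : ℤ) : m • s + k • t = 0 ↔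
      ((a * b : ℕ) : ℤ) ∣ m ∧ ((a * c : ℕ) : ℤ) ∣ w * m + a * k := by
    rw [← Subtype.coe_inj, hcomb, ← ZMod.intCast_zmod_eq_zero_iff_dvd,
      ← ZMod.intCast_zmod_eq_zero_iff_dvd]
    exact Prod.ext_iff
  refine ⟨s, t, ?_, fun m k h => ?_, ?_⟩
  · rintro ⟨⟨x, y⟩, hxy⟩
    obtain ⟨m, rfl⟩ := ZMod.intCast_surjective x
    obtain ⟨n, rfl⟩ := ZMod.intCast_surjective y
    obtain ⟨k, hk⟩ := (hmem m n).1 hxy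
    refine ⟨m, k, Subtype.ext ?_⟩
    rw [hcomb, ← hk, add_sub_cancel]
  · obtain ⟨⟨m', rfl⟩, h⟩ := (hzero m k).1 h
    have hb : (b.gcd c : ℤ) ∣ b := Int.natCast_dvd_natCast.2 (Nat.gcd_dvd_left b c)
    have hc' : (b.gcd c : ℤ) ∣ c := Int.natCast_dvd_natCast.2 (Nat.gcd_dvd_right b c)
    push_cast at h ⊢
    refine ⟨(hb.mul_left _).mul_right _, ?_⟩
    rw [show w * (a * b * m') + a * k = a * (b * (w * m') + k) by ring] at h
    have h := hc'.trans (Int.dvd_of_mul_dvd_mul_left (by exact_mod_cast ha.ne') h)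
    exact (dvd_add_right (hb.mul_right _)).1 h
  · have hbt : (b : ℤ) • t = (w' * (a * b)) • s := by
      have h := (hzero (w' * (a * b)) (-b)).2 ⟨by simp, ?_⟩
      · rwa [neg_smul, add_neg_eq_zero, eq_comm] at h
      · rw [show w * (w' * (a * b)) + a * -(b : ℤ) = (w' * w - 1) * (a * b) by ring]
        exact_mod_cast hww.mul_right _
    have hct : (c : ℤ) • t = 0 := by
      simpa using (hzero 0 c).2 (by simp)
    refine ⟨b.gcdA c * (w' * (a * b)), ?_⟩
    change (b.gcdA c * (w' * (a * b))) • s = b.gcd c • t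
    rw [← natCast_zsmul, Nat.gcd_eq_gcd_ab, add_smul, mul_comm (c : ℤ), mul_comm (b : ℤ),
      mul_smul _ (c : ℤ), mul_smul _ (b : ℤ), hct, hbt, smul_zero, add_zero, mul_smul]


/-- Let `G = μ_{ab} ×_{μ_a} μ_{ac}` be the fibre product of cyclic groups with respect to
fixed surjections `μ_{ab} → μ_a` and `μ_{ac} → μ_a`. Then the Schur multiplier
`H²(G, ℂ*)` is cyclic of order `gcd(b, c)`. -/
theorem stmt17 (a b c : ℕ) (ha : 0 < a) (hb : 0 < b) (hc : 0 < c)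
    (f : ZMod (a * b) →+ ZMod a) (g : ZMod (a * c) →+ ZMod a)
    (hf : Function.Surjective f) (hg : Function.Surjective g) :
    Nonempty ((groupCohomology
        (Rep.trivial ℤ (Multiplicative ↥(fibreProd a b c f g)) (Additive ℂˣ)) 2) ≃+
      ZMod (Nat.gcd b c)) := by
  obtain ⟨ε, hε, hεr⟩ :=
    exists_zmod_addMonoidHom_complex_units (b.gcd c) (Nat.gcd_pos_of_pos_left c hb).ne'
  obtain ⟨s, t, hgen, hind, ht⟩ := exists_generators_fibreProd (b := b) ha hc hf hg
  let _ : DivisibleBy (Additive ℂˣ) ℤ := divisibleByOfSMulRightSurj _ _ fun hn x =>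
    exists_zpow_eq_complex_units hn x.toMul
  exact nonempty_H2_addEquiv_zmod ε hε hεr hgen hind ht
end

section
/- Let G = (2m, 2m; G₁, G₁) ⊂ GL₂ be the group μ_{2m}·G₁ (m a positive integer, G₁ ⊂ SL₂ a finite subgroup containing -I). Then H²(G, ℂ*) is isomorphic to Hom(μ_m, (G₁/⟨-I⟩)^∨), i.e., the group of characters χ of G₁ of order dividing m that are trivial on -I. -/
open Matrix

/-- The scalar matrix `z·I` as an element of `GL₂(ℂ)`, for a unit `z`. -/
noncomputable def scalarGL (z : ℂˣ) : GL (Fin 2) ℂ :=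
  Units.map (algebraMap ℂ (Matrix (Fin 2) (Fin 2) ℂ)).toMonoidHom z

/-- The subgroup `G = μ_{2m}·G₁` of `GL₂(ℂ)` generated by the scalars `μ_{2m}`
together with `G₁`. -/
noncomputable def muG (m : ℕ) (G₁ : Subgroup (GL (Fin 2) ℂ)) : Subgroup (GL (Fin 2) ℂ) :=
  Subgroup.closure ((scalarGL '' {z : ℂˣ | z ^ (2 * m) = 1}) ∪ (G₁ : Set (GL (Fin 2) ℂ)))

/-- The group of characters `χ` of `G₁` with `χ^m = 1` which are trivial on a fixed
element `negI` (the matrix `-I`); i.e. `Hom(μ_m, (G₁/⟨-I⟩)^∨)`. -/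
def charSubgroup (G₁ : Subgroup (GL (Fin 2) ℂ)) (m : ℕ) (negI : ↥G₁) :
    Subgroup (↥G₁ →* ℂˣ) where
  carrier := {χ | χ ^ m = 1 ∧ χ negI = 1}
  one_mem' := by simp
  mul_mem' := by
    rintro χ ψ ⟨h1, h2⟩ ⟨h3, h4⟩
    exact ⟨by rw [mul_pow, h1, h3]; ext x; simp, by simp [h2, h4]⟩
  inv_mem' := by
    rintro χ ⟨h1, h2⟩
    exact ⟨by rw [inv_pow, h1]; ext x; simp, by simp [h2]⟩

section CentralExtension

open scoped commutatorElement

/-- `ι` and `π` present `E` as a central extension of `G` by `ℂˣ`. -/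
structure IsCentralExt {E G : Type} [Group E] [Group G] (ι : ℂˣ →* E) (π : E →* G) : Prop where
  commute : ∀ z e, Commute (ι z) e
  injective : Function.Injective ι
  surjective : Function.Surjective π
  map_eq_one_iff : ∀ e, π e = 1 ↔ ∃ z, ι z = e

/-- The subgroup `K` admits a homomorphism to `ℂˣ` that is inverse to `ι` on the scalars. -/
def Retracts {E : Type} [Group E] (ι : ℂˣ →* E) (K : Subgroup E) : Prop :=
  ∃ r : K →* ℂˣ, ∀ z (h : ι z ∈ K), r ⟨ι z, h⟩ = z

theorem baer_additive_units_complex : Module.Baer ℤ (Additive ℂˣ) := by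
  let _ : DivisibleBy (Additive ℂˣ) ℕ := divisibleByOfSMulRightSurj _ _ fun {n} hn a => by
    obtain ⟨w, hw⟩ := IsAlgClosed.exists_pow_nat_eq (a.toMul : ℂ) (Nat.pos_of_ne_zero hn)
    have hw0 : w ≠ 0 := by
      rintro rfl
      rw [zero_pow hn] at hw
      exact a.toMul.ne_zero hw.symm
    exact ⟨Additive.ofMul (Units.mk0 w hw0), Additive.toMul.injective (Units.ext hw)⟩
  let _ : DivisibleBy (Additive ℂˣ) ℤ := AddGroup.divisibleByIntOfDivisibleByNat _
  exact Module.Baer.of_divisible _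

theorem exists_retraction {E : Type} [Group E] (ι : ℂˣ →* E)
    (h : ∀ z, ι z ∈ commutator E → z = 1) : ∃ r : E →* ℂˣ, ∀ z, r (ι z) = z := by
  let f : ℂˣ →* Abelianization E := Abelianization.of.comp ι
  have hf : Function.Injective f := (injective_iff_map_eq_one f).2 fun z hz => h z <| by
    rwa [← Abelianization.ker_of, MonoidHom.mem_ker]
  obtain ⟨g, hg⟩ := baer_additive_units_complex.extension_property_addMonoidHom
    (MonoidHom.toAdditive f) hf (AddMonoidHom.id _)
  exact ⟨(MonoidHom.toAdditive.symm g).comp Abelianization.of,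
    fun z => congrArg Additive.toMul (DFunLike.congr_fun hg (Additive.ofMul z))⟩

theorem retracts_of_commutator {E : Type} [Group E] {ι : ℂˣ →* E} {K : Subgroup E}
    (hK : ∀ z, ι z ∈ K) (h : ∀ z, ι z ∈ ⁅K, K⁆ → z = 1) : Retracts ι K := by
  obtain ⟨r, hr⟩ := exists_retraction (ι.codRestrict K hK) fun z hz => h z <| by
    rw [← K.map_subtype_commutator]
    exact ⟨_, hz, rfl⟩
  exact ⟨r, fun z _ => hr z⟩

variable {E G : Type} [Group E] [Group G] {ι : ℂˣ →* E} {π : E →* G}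

namespace IsCentralExt

theorem map_scalar (hE : IsCentralExt ι π) (z : ℂˣ) : π (ι z) = 1 :=
  (hE.map_eq_one_iff _).2 ⟨z, rfl⟩

theorem scalar_mem_comap (hE : IsCentralExt ι π) (H : Subgroup G) (z : ℂˣ) :
    ι z ∈ H.comap π := by
  rw [Subgroup.mem_comap, hE.map_scalar]
  exact H.one_mem

theorem eq_mul_scalar (hE : IsCentralExt ι π) {x y : E} (h : π x = π y) : ∃ z, x = ι z * y := by
  obtain ⟨z, hz⟩ := (hE.map_eq_one_iff (x * y⁻¹)).1 (by rw [map_mul, map_inv, h, mul_inv_cancel])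
  exact ⟨z, by rw [hz, inv_mul_cancel_right]⟩

/-- Lifts of elements of a cyclic subgroup commute. -/
theorem commute_of_mem_zpowers (hE : IsCentralExt ι π) {c : G} {x y : E}
    (hx : π x ∈ Subgroup.zpowers c) (hy : π y ∈ Subgroup.zpowers c) : Commute x y := by
  obtain ⟨c, rfl⟩ := hE.surjective c
  obtain ⟨i, hi⟩ := hx
  obtain ⟨j, hj⟩ := hy
  obtain ⟨z, rfl⟩ := hE.eq_mul_scalar (x := x) (y := c ^ i) (by simpa using hi.symm)
  obtain ⟨w, rfl⟩ := hE.eq_mul_scalar (x := y) (y := c ^ j) (by simpa using hj.symm)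
  exact ((hE.commute _ _).mul_right (hE.commute _ _)).mul_left
    (((hE.commute _ _).symm).mul_right ((Commute.refl c).zpow_zpow i j))

theorem retracts_of_commute (hE : IsCentralExt ι π) {H : Subgroup G}
    (hlift : ∀ x y : E, π x ∈ H → π y ∈ H → Commute x y) : Retracts ι (H.comap π) :=
  retracts_of_commutator (hE.scalar_mem_comap H) fun z hz => by
    have : ⁅H.comap π, H.comap π⁆ ≤ ⊥ := Subgroup.commutator_le.2 fun x hx y hy =>
      Subgroup.mem_bot.2 (commutatorElement_eq_one_iff_commute.2 (hlift x y hx hy))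
    exact hE.injective ((Subgroup.mem_bot.1 (this hz)).trans (map_one ι).symm)

/-- A subgroup in which commuting elements have commuting lifts splits as soon as some
centralizer in it is commutative of index at most two. -/
theorem retracts_of_centralizer (hE : IsCentralExt ι π) {H : Subgroup G}
    (hlift : ∀ x y : E, π x ∈ H → π y ∈ H → Commute (π x) (π y) → Commute x y)
    (C : Subgroup G) (hCH : C ≤ H) (hC : ∀ a ∈ C, ∀ b ∈ C, Commute a b)
    {w : G} (hw : w ∈ H) (hwC : ∀ a ∈ C, w * a * w⁻¹ ∈ C)
    (hHC : ∀ u ∈ H, u ∈ C ∨ u * w⁻¹ ∈ C) : Retracts ι (H.comap π) := by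
  obtain ⟨w, rfl⟩ := hE.surjective w
  have comm : ∀ a b : E, π a ∈ C → π b ∈ C → a * b = b * a := fun a b ha hb =>
    hlift a b (hCH ha) (hCH hb) (hC _ ha _ hb)
  have conj : ∀ a : E, π a ∈ C → π (w * a * w⁻¹) ∈ C := fun a ha => by simpa using hwC _ ha
  let D : Subgroup E :=
    { carrier := {d | ∃ a, π a ∈ C ∧ d = ⁅a, w⁆}
      one_mem' := ⟨1, by simp⟩
      mul_mem' := by
        rintro _ _ ⟨a, ha, rfl⟩ ⟨b, hb, rfl⟩
        refine ⟨a * b, by simpa using C.mul_mem ha hb, ?_⟩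
        have h1 := comm (w * a⁻¹ * w⁻¹) (b * (w * b⁻¹ * w⁻¹))
          (conj _ (by simpa using ha))
          (by rw [map_mul]; exact C.mul_mem hb (conj _ (by simpa using hb)))
        have h2 := comm (w * a⁻¹ * w⁻¹) (w * b⁻¹ * w⁻¹)
          (conj _ (by simpa using ha)) (conj _ (by simpa using hb))
        calc ⁅a, w⁆ * ⁅b, w⁆ = a * ((w * a⁻¹ * w⁻¹) * (b * (w * b⁻¹ * w⁻¹))) := by
              simp only [commutatorElement_def]; group
          _ = a * b * ((w * b⁻¹ * w⁻¹) * (w * a⁻¹ * w⁻¹)) := by rw [h1]; group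
          _ = ⁅a * b, w⁆ := by simp only [commutatorElement_def]; group
      inv_mem' := by
        rintro _ ⟨a, ha, rfl⟩
        refine ⟨a⁻¹, by simpa using ha, ?_⟩
        have h1 := comm (w * a * w⁻¹) a⁻¹ (conj _ ha) (by simpa using ha)
        calc ⁅a, w⁆⁻¹ = (w * a * w⁻¹) * a⁻¹ := by simp only [commutatorElement_def]; group
          _ = a⁻¹ * (w * a * w⁻¹) := h1
          _ = ⁅a⁻¹, w⁆ := by simp only [commutatorElement_def]; group }
  have hDcomm : ∀ a b : E, π a ∈ C → π b ∈ C → b * ⁅a, w⁆ * b⁻¹ = ⁅a, w⁆ := fun a b ha hb => by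
    have h1 := comm b (a * (w * a⁻¹ * w⁻¹)) hb
      (by rw [map_mul]; exact C.mul_mem ha (conj _ (by simpa using ha)))
    rw [mul_inv_eq_iff_eq_mul]
    calc b * ⁅a, w⁆ = b * (a * (w * a⁻¹ * w⁻¹)) := by simp only [commutatorElement_def]; group
      _ = ⁅a, w⁆ * b := by rw [h1]; simp only [commutatorElement_def]; group
  have mixed : ∀ a b : E, π a ∈ C → π b ∈ C → ⁅a, b * w⁆ = ⁅a, w⁆ := fun a b ha hb => by
    rw [← hDcomm a b ha hb]
    calc ⁅a, b * w⁆ = (a * b) * (w * a⁻¹ * w⁻¹) * b⁻¹ := by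
          simp only [commutatorElement_def]; group
      _ = b * ⁅a, w⁆ * b⁻¹ := by rw [comm a b ha hb]; simp only [commutatorElement_def]; group
  have cosets : ∀ u ∈ H.comap π, π u ∈ C ∨ ∃ a, π a ∈ C ∧ u = a * w := fun u hu =>
    (hHC _ hu).imp id fun h => ⟨u * w⁻¹, by simpa using h, by group⟩
  have hle : ⁅H.comap π, H.comap π⁆ ≤ D := Subgroup.commutator_le.2 fun u hu v hv => by
    rcases cosets u hu with ha | ⟨a, ha, rfl⟩ <;> rcases cosets v hv with hb | ⟨b, hb, rfl⟩
    · rw [commutatorElement_eq_one_iff_commute.2 (comm u v ha hb)]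
      exact D.one_mem
    · exact ⟨u, ha, mixed u b ha hb⟩
    · rw [← commutatorElement_inv, mixed v a hb ha]
      exact D.inv_mem ⟨v, hb, rfl⟩
    · refine ⟨a * b⁻¹, by simpa using C.mul_mem ha (C.inv_mem hb), ?_⟩
      have h1 := comm b⁻¹ (w * b * a⁻¹ * w⁻¹) (by simpa using hb) <| by
        simpa [mul_assoc] using conj (b * a⁻¹) (by simpa using C.mul_mem hb (C.inv_mem ha))
      calc ⁅a * w, b * w⁆ = a * ((w * b * a⁻¹ * w⁻¹) * b⁻¹) := by
            simp only [commutatorElement_def]; group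
        _ = ⁅a * b⁻¹, w⁆ := by rw [← h1]; simp only [commutatorElement_def]; group
  refine retracts_of_commutator (hE.scalar_mem_comap H) fun z hz => ?_
  obtain ⟨a, ha, hza⟩ := hle hz
  refine hE.injective (hza.trans ?_ |>.trans (map_one ι).symm)
  refine commutatorElement_eq_one_iff_commute.2 (hlift a w (hCH ha) hw ?_)
  rw [← commutatorElement_eq_one_iff_commute, ← map_commutatorElement, ← hza, hE.map_scalar]

/-- A central extension of a finite group retracts if it does so over all Sylow subgroups. -/
theorem exists_retraction_of_sylow (hE : IsCentralExt ι π) [Finite G]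
    (h : ∀ p : ℕ, p.Prime → ∀ P : Sylow p G, Retracts ι ((P : Subgroup G).comap π)) :
    ∃ r : E →* ℂˣ, ∀ z, r (ι z) = z := by
  let S : AddSubgroup ℤ :=
    { carrier := {n | ∃ r : E →* ℂˣ, ∀ z, r (ι z) = z ^ n}
      zero_mem' := ⟨1, by simp⟩
      add_mem' := by
        rintro a b ⟨r, hr⟩ ⟨s, hs⟩
        exact ⟨r * s, fun z => by rw [MonoidHom.mul_apply, hr, hs, _root_.zpow_add]⟩
      neg_mem' := by
        rintro a ⟨r, hr⟩
        exact ⟨r⁻¹, fun z => by rw [MonoidHom.inv_apply, hr, _root_.zpow_neg]⟩ }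
  have hindex : ∀ p : ℕ, p.Prime → ∀ P : Sylow p G, ((P : Subgroup G).index : ℤ) ∈ S := by
    intro p hp P
    obtain ⟨r, hr⟩ := h p hp P
    have hi := (P : Subgroup G).index_comap_of_surjective hE.surjective
    have : ((P : Subgroup G).comap π).FiniteIndex := ⟨hi ▸ Subgroup.index_ne_zero_of_finite⟩
    refine ⟨r.transfer, fun z => ?_⟩
    rw [MonoidHom.transfer_eq_pow r (ι z) fun k g _ => by
      rw [mul_assoc, ((hE.commute z g).pow_left k).eq, inv_mul_cancel_left]]
    have hz := hr (z ^ (P : Subgroup G).index) (hE.scalar_mem_comap _ _)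
    rw [zpow_natCast, ← hz]
    exact congrArg r (Subtype.ext ((congrArg _ hi).trans (map_pow ι _ _).symm))
  obtain ⟨n, hn⟩ := Int.subgroup_cyclic S
  have hdvd : ∀ a ∈ S, n ∣ a := fun a ha => by
    rw [hn, AddSubgroup.mem_closure_singleton] at ha
    obtain ⟨k, rfl⟩ := ha
    exact ⟨k, by rw [smul_eq_mul, mul_comm]⟩
  have hunit : n.natAbs = 1 := by
    by_contra hne
    obtain ⟨p, hp, hpn⟩ := Nat.exists_prime_and_dvd hne
    have : Fact p.Prime := ⟨hp⟩
    have P : Sylow p G := default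
    refine P.not_dvd_index ?_
    have := (Int.natCast_dvd.2 hpn).trans (hdvd _ (hindex p hp P))
    exact_mod_cast this
  have h1 : (1 : ℤ) ∈ S := by
    rw [hn, AddSubgroup.mem_closure_singleton]
    rcases Int.natAbs_eq n with h | h
    · exact ⟨1, by rw [h, hunit]; simp⟩
    · exact ⟨-1, by rw [h, hunit]; simp⟩
  obtain ⟨r, hr⟩ := h1
  exact ⟨r, fun z => by rw [hr, zpow_one]⟩

end IsCentralExt

end CentralExtension

section SpecialLinear

theorem exists_eq_smul_one_add_smul_of_commute {x a : Matrix (Fin 2) (Fin 2) ℂ}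
    (hx : ∀ c : ℂ, x ≠ c • 1) (h : Commute a x) : ∃ α β : ℂ, a = α • 1 + β • x := by
  have h00 := congrFun₂ h.eq 0 0
  have h01 := congrFun₂ h.eq 0 1
  have h10 := congrFun₂ h.eq 1 0
  simp only [Matrix.mul_apply, Fin.sum_univ_two] at h00 h01 h10
  by_cases hq : x 0 1 = 0
  · by_cases hr : x 1 0 = 0
    · have hd : x 0 0 - x 1 1 ≠ 0 := fun hd => hx (x 0 0) <| by
        ext i j
        fin_cases i <;> fin_cases j <;> simp [hq, hr]
        linear_combination -hd
      rw [hq] at h00 h01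
      rw [hr] at h10
      have e1 : a 0 1 = 0 := by
        have : a 0 1 * (x 0 0 - x 1 1) = 0 := by linear_combination -h01
        exact (mul_eq_zero.1 this).resolve_right hd
      have e2 : a 1 0 = 0 := by
        have : a 1 0 * (x 0 0 - x 1 1) = 0 := by linear_combination h10
        exact (mul_eq_zero.1 this).resolve_right hd
      refine ⟨a 0 0 - (a 0 0 - a 1 1) / (x 0 0 - x 1 1) * x 0 0,
        (a 0 0 - a 1 1) / (x 0 0 - x 1 1), ?_⟩
      ext i j
      fin_cases i <;> fin_cases j <;> simp [hq, hr, e1, e2]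
      field_simp
      ring
    · refine ⟨a 0 0 - a 1 0 / x 1 0 * x 0 0, a 1 0 / x 1 0, ?_⟩
      ext i j
      fin_cases i <;> fin_cases j <;> simp <;> field_simp
      · linear_combination h00
      · linear_combination h10
  · refine ⟨a 0 0 - a 0 1 / x 0 1 * x 0 0, a 0 1 / x 0 1, ?_⟩
    ext i j
    fin_cases i <;> fin_cases j <;> simp <;> field_simp
    · linear_combination -h00
    · linear_combination -h01

theorem commute_of_commute_of_not_scalar {x a b : Matrix (Fin 2) (Fin 2) ℂ}
    (hx : ∀ c : ℂ, x ≠ c • 1) (ha : Commute a x) (hb : Commute b x) : Commute a b := by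
  obtain ⟨α, β, rfl⟩ := exists_eq_smul_one_add_smul_of_commute hx ha
  exact ((Commute.one_left b).smul_left α).add_left ((hb.symm).smul_left β)

theorem eq_one_of_mulVec_eq_self {g : Matrix (Fin 2) (Fin 2) ℂ} (hdet : g.det = 1) {n : ℕ}
    (hn : n ≠ 0) (hg : g ^ n = 1) {v : Fin 2 → ℂ} (hv : v ≠ 0) (hgv : g *ᵥ v = v) : g = 1 := by
  have hdet' : (g - 1).det = 0 := Matrix.exists_mulVec_eq_zero_iff.1
    ⟨v, hv, by rw [Matrix.sub_mulVec, hgv, Matrix.one_mulVec, sub_self]⟩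
  have hsq : (g - 1) * (g - 1) = 0 := by
    rw [Matrix.det_fin_two] at hdet hdet'
    simp only [Matrix.sub_apply, Matrix.one_apply_eq, ne_eq, zero_ne_one, one_ne_zero,
      not_false_eq_true, Matrix.one_apply_ne, sub_zero] at hdet'
    ext i j
    fin_cases i <;> fin_cases j <;> simp [Matrix.mul_apply, Fin.sum_univ_two]
    · linear_combination (g 0 0 - 1) * (hdet - hdet') - hdet'
    · linear_combination g 0 1 * (hdet - hdet')
    · linear_combination g 1 0 * (hdet - hdet')
    · linear_combination (g 1 1 - 1) * (hdet - hdet') - hdet'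
  have hpow : ∀ k : ℕ, g ^ k = 1 + (k : ℂ) • (g - 1) := fun k => by
    induction k with
    | zero => simp
    | succ k ih =>
      have : g = 1 + (g - 1) := by abel
      rw [pow_succ, ih]
      nth_rw 2 [this]
      rw [mul_add, mul_one, add_mul, one_mul, smul_mul_assoc, hsq, smul_zero, add_zero, add_assoc]
      push_cast
      rw [add_smul, one_smul]
  have := hpow n
  rw [hg, left_eq_add, smul_eq_zero] at this
  exact sub_eq_zero.1 (this.resolve_left (Nat.cast_ne_zero.2 hn))

variable {G : Type} [Group G] {ρ : G →* Matrix (Fin 2) (Fin 2) ℂ}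

theorem commute_iff_of_injective (hρ : Function.Injective ρ) {a b : G} :
    Commute (ρ a) (ρ b) ↔ Commute a b :=
  ⟨fun h => hρ (by rw [map_mul, map_mul]; exact h), fun h => h.map ρ⟩

/-- A finite commutative subgroup of `SL₂(ℂ)` is cyclic. -/
theorem isCyclic_of_injective_of_det {H : Type} [Group H] [Finite H]
    (hcomm : ∀ a b : H, Commute a b) {ρ : H →* Matrix (Fin 2) (Fin 2) ℂ} (hρ : Function.Injective ρ)
    (hdet : ∀ g, (ρ g).det = 1) : IsCyclic H := by
  obtain ⟨v, hv, heig⟩ : ∃ v : Fin 2 → ℂ, v ≠ 0 ∧ ∀ g, ∃ c : ℂ, ρ g *ᵥ v = c • v := by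
    by_cases hs : ∀ g, ∃ c : ℂ, ρ g = c • 1
    · refine ⟨1, one_ne_zero, fun g => ?_⟩
      obtain ⟨c, hc⟩ := hs g
      exact ⟨c, by rw [hc, Matrix.smul_mulVec, Matrix.one_mulVec]⟩
    · push Not at hs
      obtain ⟨x, hx⟩ := hs
      obtain ⟨l, hl⟩ := Module.End.exists_eigenvalue (Matrix.toLin' (ρ x))
      obtain ⟨v, hv⟩ := hl.exists_hasEigenvector
      refine ⟨v, hv.2, fun g => ?_⟩
      obtain ⟨α, β, h⟩ := exists_eq_smul_one_add_smul_of_commute hx ((hcomm g x).map ρ)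
      have hxv : ρ x *ᵥ v = l • v := by simpa using hv.apply_eq_smul
      exact ⟨α + β * l, by
        rw [h, Matrix.add_mulVec, Matrix.smul_mulVec, Matrix.smul_mulVec, Matrix.one_mulVec,
          hxv, add_smul, mul_smul]⟩
  choose χ hχ using heig
  have huniq : ∀ {c d : ℂ}, c • v = d • v → c = d := fun h => smul_left_injective ℂ hv h
  let f : H →* ℂ :=
    { toFun := χ
      map_one' := huniq (by rw [← hχ, map_one, Matrix.one_mulVec, one_smul])
      map_mul' := fun a b => huniq <| by
        rw [← hχ, map_mul, ← Matrix.mulVec_mulVec, hχ b, Matrix.mulVec_smul, hχ a, smul_smul,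
          mul_comm] }
  refine isCyclic_of_injective_ringHom f fun a b hab => ?_
  have h1 : f (a * b⁻¹) = 1 := by
    rw [map_mul, hab, ← map_mul, mul_inv_cancel, map_one]
  rw [← mul_inv_eq_one]
  refine hρ ?_
  rw [map_one]
  refine eq_one_of_mulVec_eq_self (hdet _) (Nat.card_pos (α := H)).ne'
    (by rw [← map_pow, pow_card_eq_one', map_one]) hv ?_
  rw [hχ]
  exact (congrArg (· • v) h1).trans (one_smul ℂ v)

/-- Commuting elements of a finite subgroup of `SL₂(ℂ)` lie in a common cyclic subgroup. -/
theorem exists_mem_zpowers_of_commute [Finite G] (hρ : Function.Injective ρ)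
    (hdet : ∀ g, (ρ g).det = 1) {a b : G} (h : Commute a b) :
    ∃ c, a ∈ Subgroup.zpowers c ∧ b ∈ Subgroup.zpowers c := by
  let K := Subgroup.closure {a, b}
  have : IsMulCommutative K := Subgroup.isMulCommutative_closure <| by
    rintro x (rfl | rfl) y (rfl | rfl)
    exacts [rfl, h, h.symm, rfl]
  have : IsCyclic K := isCyclic_of_injective_of_det
    (fun a b => Std.Commutative.comm (op := (· * ·)) a b) (ρ := ρ.comp K.subtype)
    (hρ.comp K.subtype_injective) fun g => hdet g
  obtain ⟨c, hc⟩ := IsCyclic.exists_generator (α := K)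
  have key : ∀ x (hx : x ∈ K), x ∈ Subgroup.zpowers (c : G) := fun x hx => by
    obtain ⟨k, hk⟩ := hc ⟨x, hx⟩
    exact ⟨k, by simpa using congrArg Subtype.val hk⟩
  exact ⟨c, key a (Subgroup.subset_closure (by simp)), key b (Subgroup.subset_closure (by simp))⟩

/-- A noncommutative finite `p`-group has an element that is central modulo the center, but
not central. -/
theorem IsPGroup.exists_commutator_mem_center {p : ℕ} [Fact p.Prime] {P : Type} [Group P]
    [Finite P] (hP : IsPGroup p P) (hcomm : ¬ ∀ a b : P, Commute a b) :
    ∃ x : P, x ∉ Subgroup.center P ∧ ∀ g : P, g * x * g⁻¹ * x⁻¹ ∈ Subgroup.center P := by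
  have : Nontrivial (P ⧸ Subgroup.center P) := by
    rw [QuotientGroup.nontrivial_iff]
    exact fun htop => hcomm fun a b =>
      (Subgroup.mem_center_iff.1 (htop ▸ Subgroup.mem_top b : b ∈ Subgroup.center P) a)
  have := (hP.to_quotient (Subgroup.center P)).center_nontrivial
  obtain ⟨⟨y, hy⟩, hy1⟩ := exists_ne (1 : Subgroup.center (P ⧸ Subgroup.center P))
  obtain ⟨x, rfl⟩ := QuotientGroup.mk_surjective y
  refine ⟨x, fun hx => hy1 (Subtype.ext ((QuotientGroup.eq_one_iff x).2 hx)), fun g => ?_⟩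
  rw [← QuotientGroup.eq_one_iff]
  have := Subgroup.mem_center_iff.1 hy (g : P ⧸ Subgroup.center P)
  rw [QuotientGroup.mk_mul, QuotientGroup.mk_mul, QuotientGroup.mk_mul, this, QuotientGroup.mk_inv,
    QuotientGroup.mk_inv, mul_inv_cancel_right, mul_inv_cancel]

theorem eq_one_or_eq_neg_one_of_commute_all (hdet : ∀ g, (ρ g).det = 1)
    (hρ : Function.Injective ρ) {P : Subgroup G}
    (hcomm : ¬ ∀ a ∈ P, ∀ b ∈ P, Commute a b) {c : G} (hc : ∀ a ∈ P, Commute a c) :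
    ρ c = 1 ∨ ρ c = -1 := by
  obtain ⟨k, hk⟩ : ∃ k : ℂ, ρ c = k • 1 := by
    by_contra! hns
    exact hcomm fun a ha b hb => (commute_iff_of_injective hρ).1
      (commute_of_commute_of_not_scalar hns ((hc a ha).map ρ) ((hc b hb).map ρ))
  have hd := hdet c
  rw [hk, Matrix.det_smul, Matrix.det_one, mul_one, Fintype.card_fin, sq_eq_one_iff] at hd
  rcases hd with rfl | rfl
  · exact Or.inl (by rw [hk, one_smul])
  · exact Or.inr (by rw [hk, neg_smul, one_smul])

theorem IsCentralExt.retracts_of_isPGroup [Finite G] {E : Type} [Group E] {ι : ℂˣ →* E} {π : E →* G}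
    (hE : IsCentralExt ι π) (hρ : Function.Injective ρ) (hdet : ∀ g, (ρ g).det = 1)
    {p : ℕ} [Fact p.Prime] {P : Subgroup G} (hP : IsPGroup p P) : Retracts ι (P.comap π) := by
  have hlift : ∀ x y : E, Commute (π x) (π y) → Commute x y := fun x y h => by
    obtain ⟨c, hx, hy⟩ := exists_mem_zpowers_of_commute hρ hdet h
    exact hE.commute_of_mem_zpowers hx hy
  by_cases hcomm : ∀ a ∈ P, ∀ b ∈ P, Commute a b
  · exact hE.retracts_of_commute fun x y hx hy => hlift x y (hcomm _ hx _ hy)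
  obtain ⟨⟨x, hxP⟩, hx, hxc⟩ := hP.exists_commutator_mem_center fun h => hcomm fun a ha b hb =>
    congrArg Subtype.val (h ⟨a, ha⟩ ⟨b, hb⟩)
  obtain ⟨w, hwP, hwx⟩ : ∃ w ∈ P, ¬ Commute w x := by
    by_contra! h
    exact hx (Subgroup.mem_center_iff.2 fun g => Subtype.ext (h g g.2))
  have anti : ∀ a ∈ P, ¬ Commute a x → ρ a * ρ x = -(ρ x * ρ a) := fun a ha hax => by
    have hc : ∀ b ∈ P, Commute b (a * x * a⁻¹ * x⁻¹) := fun b hb =>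
      congrArg Subtype.val (Subgroup.mem_center_iff.1 (hxc ⟨a, ha⟩) ⟨b, hb⟩)
    have hax' : a * x = (a * x * a⁻¹ * x⁻¹) * (x * a) := by group
    rcases eq_one_or_eq_neg_one_of_commute_all hdet hρ hcomm hc with h1 | h1
    · refine absurd (hax'.trans ?_) hax
      rw [hρ (h1.trans (map_one ρ).symm), one_mul]
    · rw [← map_mul, hax', map_mul, h1, neg_one_mul, map_mul]
  have hns : ∀ c : ℂ, ρ x ≠ c • 1 := fun c hc => hwx <| (commute_iff_of_injective hρ).1 <| by
    rw [hc]
    exact (Commute.one_right _).smul_right c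
  have hw := anti w hwP hwx
  have hw1 : ρ w⁻¹ * ρ w = 1 := by rw [← map_mul, inv_mul_cancel, map_one]
  have hw2 : ρ w * ρ w⁻¹ = 1 := by rw [← map_mul, mul_inv_cancel, map_one]
  have hw' : ρ w⁻¹ * ρ x = -(ρ x * ρ w⁻¹) := by
    calc ρ w⁻¹ * ρ x = ρ w⁻¹ * (ρ x * ρ w) * ρ w⁻¹ := by
          rw [mul_assoc, mul_assoc, hw2, mul_one]
      _ = -((ρ w⁻¹ * ρ w) * ρ x * ρ w⁻¹) := by
          rw [← neg_eq_iff_eq_neg.2 hw]; noncomm_ring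
      _ = -(ρ x * ρ w⁻¹) := by rw [hw1, one_mul]
  refine hE.retracts_of_centralizer (fun a b _ _ => hlift a b) (P ⊓ Subgroup.centralizer {x})
    inf_le_left ?_ hwP ?_ ?_
  · rintro a ⟨-, ha⟩ b ⟨-, hb⟩
    replace ha := Subgroup.mem_centralizer_singleton_iff.1 ha
    replace hb := Subgroup.mem_centralizer_singleton_iff.1 hb
    exact (commute_iff_of_injective hρ).1 (commute_of_commute_of_not_scalar hns
      (Commute.map ha ρ) (Commute.map hb ρ))
  · rintro a ⟨haP, ha⟩
    replace ha := Subgroup.mem_centralizer_singleton_iff.1 ha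
    refine ⟨P.mul_mem (P.mul_mem hwP haP) (P.inv_mem hwP), ?_⟩
    refine Subgroup.mem_centralizer_singleton_iff.2 ?_
    refine hρ ?_
    have ha' : ρ a * ρ x = ρ x * ρ a := by rw [← map_mul, ← map_mul, ha]
    simp only [map_mul]
    calc ρ w * ρ a * ρ w⁻¹ * ρ x = -(ρ w * (ρ a * ρ x) * ρ w⁻¹) := by
          rw [mul_assoc, hw']; noncomm_ring
      _ = -((ρ w * ρ x) * ρ a * ρ w⁻¹) := by rw [ha']; noncomm_ring
      _ = ρ x * (ρ w * ρ a * ρ w⁻¹) := by rw [hw]; noncomm_ring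
  · intro u hu
    by_cases hux : Commute u x
    · exact Or.inl ⟨hu, Subgroup.mem_centralizer_singleton_iff.2 hux.eq⟩
    · refine Or.inr ⟨P.mul_mem hu (P.inv_mem hwP), ?_⟩
      refine Subgroup.mem_centralizer_singleton_iff.2 ?_
      refine hρ ?_
      simp only [map_mul]
      calc ρ u * ρ w⁻¹ * ρ x = -(ρ u * ρ x * ρ w⁻¹) := by rw [mul_assoc, hw']; noncomm_ring
        _ = ρ x * (ρ u * ρ w⁻¹) := by rw [anti u hu hux]; noncomm_ring

/-- A finite subgroup of `SL₂(ℂ)` has trivial Schur multiplier. -/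
theorem IsCentralExt.exists_retraction_of_injective_of_det [Finite G] {E : Type} [Group E]
    {ι : ℂˣ →* E} {π : E →* G} (hE : IsCentralExt ι π) (hρ : Function.Injective ρ)
    (hdet : ∀ g, (ρ g).det = 1) : ∃ r : E →* ℂˣ, ∀ z, r (ι z) = z :=
  hE.exists_retraction_of_sylow fun p hp P => by
    have : Fact p.Prime := ⟨hp⟩
    exact hE.retracts_of_isPGroup hρ hdet P.isPGroup'

end SpecialLinear

section TwoCocycles

open scoped commutatorElement

variable {G : Type} [Group G]

/-- `c` is a 2-cocycle of `G` with values in the trivial module `ℂˣ`. -/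
def IsTwoCocycle (c : G → G → ℂˣ) : Prop :=
  ∀ g h j, c (g * h) j * c g h = c h j * c g (h * j)

/-- `c` is the coboundary of a function `G → ℂˣ`. -/
def IsTwoCoboundary (c : G → G → ℂˣ) : Prop :=
  ∃ b : G → ℂˣ, ∀ g h, c g h * b (g * h) = b g * b h

theorem commutatorElement_mul_left_of_commute {s b : G} (h : Commute s b) {a : G} :
    ⁅a * s, b⁆ = ⁅a, b⁆ := by
  rw [commutatorElement_def, mul_assoc a, h.eq, commutatorElement_def]
  group

theorem commutatorElement_mul_right_of_commute {a s : G} (h : Commute a s) {b : G} :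
    ⁅a, b * s⁆ = ⁅a, b⁆ := by
  rw [← commutatorElement_inv, commutatorElement_mul_left_of_commute h.symm, commutatorElement_inv]

theorem IsTwoCocycle.one_left {c : G → G → ℂˣ} (hc : IsTwoCocycle c) (g : G) :
    c 1 g = c 1 1 := by
  have := hc 1 1 g
  rw [one_mul, one_mul] at this
  exact (mul_left_cancel this).symm

theorem IsTwoCocycle.one_right {c : G → G → ℂˣ} (hc : IsTwoCocycle c) (g : G) :
    c g 1 = c 1 1 := by
  have := hc g 1 1
  rw [mul_one, mul_one] at this
  exact mul_right_cancel this

/-- The central extension of `G` by `ℂˣ` defined by a 2-cocycle. -/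
@[ext]
structure TwistedProduct {c : G → G → ℂˣ} (hc : IsTwoCocycle c) where
  /-- The scalar component. -/
  scalar : ℂˣ
  /-- The component in the quotient. -/
  base : G

namespace TwistedProduct

variable {c : G → G → ℂˣ} (hc : IsTwoCocycle c)

instance : Mul (TwistedProduct hc) :=
  ⟨fun x y => ⟨x.scalar * y.scalar * c x.base y.base, x.base * y.base⟩⟩

instance : One (TwistedProduct hc) := ⟨⟨(c 1 1)⁻¹, 1⟩⟩

instance : Inv (TwistedProduct hc) :=
  ⟨fun x => ⟨x.scalar⁻¹ * (c x.base⁻¹ x.base)⁻¹ * (c 1 1)⁻¹, x.base⁻¹⟩⟩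

@[simp] theorem scalar_mul (x y : TwistedProduct hc) :
    (x * y).scalar = x.scalar * y.scalar * c x.base y.base := rfl

@[simp] theorem base_mul (x y : TwistedProduct hc) : (x * y).base = x.base * y.base := rfl

@[simp] theorem scalar_one : (1 : TwistedProduct hc).scalar = (c 1 1)⁻¹ := rfl

@[simp] theorem base_one : (1 : TwistedProduct hc).base = 1 := rfl

@[simp] theorem scalar_inv (x : TwistedProduct hc) :
    x⁻¹.scalar = x.scalar⁻¹ * (c x.base⁻¹ x.base)⁻¹ * (c 1 1)⁻¹ := rfl

@[simp] theorem base_inv (x : TwistedProduct hc) : x⁻¹.base = x.base⁻¹ := rfl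

instance : Group (TwistedProduct hc) :=
  Group.ofLeftAxioms
    (fun x y z => by
      ext1
      · simp only [scalar_mul, base_mul]
        calc x.scalar * y.scalar * c x.base y.base * z.scalar * c (x.base * y.base) z.base
            = x.scalar * y.scalar * z.scalar *
              (c (x.base * y.base) z.base * c x.base y.base) := by
              simp only [mul_comm, mul_left_comm]
          _ = x.scalar * (y.scalar * z.scalar * c y.base z.base) *
              c x.base (y.base * z.base) := by rw [hc]; simp only [mul_assoc]
      · simp [mul_assoc])
    (fun x => by ext1 <;> simp [hc.one_left x.base])
    (fun x => by ext1 <;> simp [mul_assoc, mul_left_comm])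

/-- The inclusion of the scalars. -/
def inl : ℂˣ →* TwistedProduct hc where
  toFun z := ⟨z * (c 1 1)⁻¹, 1⟩
  map_one' := by ext1 <;> simp
  map_mul' z w := by ext1 <;> simp [mul_assoc, mul_left_comm]

/-- The projection to the base. -/
def proj : TwistedProduct hc →* G where
  toFun := base
  map_one' := rfl
  map_mul' _ _ := rfl

theorem inl_mul_mk (z : ℂˣ) (g : G) : inl hc z * ⟨1, g⟩ = ⟨z, g⟩ := by
  ext1 <;> simp [inl, hc.one_left g]

theorem isCentralExt : IsCentralExt (inl hc) (proj hc) where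
  commute z e := by
    ext1 <;> simp [inl, hc.one_left e.base, hc.one_right e.base, mul_comm, mul_left_comm]
  injective z w h := by simpa [inl] using congrArg scalar h
  surjective g := ⟨⟨1, g⟩, rfl⟩
  map_eq_one_iff e := by
    refine ⟨fun h => ⟨e.scalar * c 1 1, ?_⟩, ?_⟩
    · ext1
      · simp [inl]
      · exact h.symm
    · rintro ⟨z, rfl⟩
      rfl

end TwistedProduct

open TwistedProduct

theorem IsTwoCocycle.isTwoCoboundary_of_retraction {c : G → G → ℂˣ} (hc : IsTwoCocycle c)
    (h : ∃ r : TwistedProduct hc →* ℂˣ, ∀ z, r (inl hc z) = z) : IsTwoCoboundary c := by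
  obtain ⟨r, hr⟩ := h
  refine ⟨fun g => r ⟨1, g⟩, fun g h => ?_⟩
  calc c g h * r ⟨1, g * h⟩ = r (inl hc (c g h) * ⟨1, g * h⟩) := by rw [map_mul, hr]
    _ = r (⟨1, g⟩ * ⟨1, h⟩) := by
        rw [inl_mul_mk]
        congr 1
        ext1 <;> simp
    _ = r ⟨1, g⟩ * r ⟨1, h⟩ := map_mul _ _ _

/-- A 2-cocycle of a central product of `H` and a cyclic group `⟨ζ⟩` is a coboundary if it is one
on `H` and `ζ` lifts to an element commuting with the lifts of `H`. -/
theorem IsTwoCocycle.isTwoCoboundary_of_cyclic {c : G → G → ℂˣ} (hc : IsTwoCocycle c)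
    {H : Type} [Group H] {j : H →* G} (hj : Function.Injective j) {ζ : G}
    (hζ : ∀ g, Commute ζ g) (hgen : ∀ g, ∃ (k : ℤ) (h : H), g = ζ ^ k * j h)
    (hH : IsTwoCoboundary fun x y => c (j x) (j y))
    (hcomm : ∀ h, c (j h) ζ = c ζ (j h)) : IsTwoCoboundary c := by
  refine hc.isTwoCoboundary_of_retraction (exists_retraction _ fun z hz => ?_)
  obtain ⟨b, hb⟩ := hH
  let b' : G → ℂˣ := Function.extend j b 1
  have hb' : ∀ x, b' (j x) = b x := fun x => hj.extend_apply b 1 x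
  let K := j.range.comap (proj hc)
  let r : K →* ℂˣ := MonoidHom.mk' (fun x => x.1.scalar * b' x.1.base) <| by
    rintro ⟨⟨z, g⟩, x, hx⟩ ⟨⟨w, g'⟩, y, hy⟩
    obtain rfl : j x = g := hx
    obtain rfl : j y = g' := hy
    change z * w * c (j x) (j y) * b' (j x * j y) = z * b' (j x) * (w * b' (j y))
    rw [← map_mul, hb', hb', hb', mul_assoc, hb, mul_mul_mul_comm]
  let t : TwistedProduct hc := ⟨1, ζ⟩
  have ht : ∀ a ∈ K, Commute a t := by
    rintro ⟨z, _⟩ ⟨x, rfl⟩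
    ext1
    · change z * 1 * c (j x) ζ = 1 * z * c ζ (j x)
      rw [hcomm, mul_one, one_mul]
    · exact ((hζ _).eq).symm
  have hdecomp : ∀ e, ∃ (k : ℤ), ∃ a ∈ K, e = a * t ^ k := fun e => by
    obtain ⟨k, h, hk⟩ := hgen (proj hc e)
    refine ⟨k, e * (t ^ k)⁻¹, ⟨h, ?_⟩, by group⟩
    rw [map_mul, map_inv, map_zpow, hk, ((hζ (j h)).zpow_left k).eq]
    exact (mul_inv_cancel_right _ _).symm
  have hle : commutator (TwistedProduct hc) ≤ r.ker.map K.subtype := by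
    refine Subgroup.commutator_le.2 fun u _ v _ => ?_
    obtain ⟨k, a, ha, rfl⟩ := hdecomp u
    obtain ⟨l, a', ha', rfl⟩ := hdecomp v
    refine ⟨⁅(⟨a, ha⟩ : K), ⟨a', ha'⟩⁆, ?_, ?_⟩
    · rw [SetLike.mem_coe, MonoidHom.mem_ker, map_commutatorElement,
        commutatorElement_eq_one_iff_commute]
      exact Commute.all _ _
    · have h1 : Commute (t ^ k) (a' * t ^ l) :=
        (((ht a' ha').zpow_right k).symm).mul_right ((Commute.refl t).zpow_zpow k l)
      rw [commutatorElement_mul_left_of_commute h1,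
        commutatorElement_mul_right_of_commute ((ht a ha).zpow_right l)]
      rfl
  obtain ⟨x, hx, hxz⟩ := hle hz
  have hx1 : x.1.scalar * b' x.1.base = 1 := hx
  have hb1 : b' 1 = c 1 1 := by
    have : c (j 1) (j 1) * b (1 * 1) = b 1 * b 1 := hb 1 1
    rw [map_one, one_mul] at this
    rw [← map_one j, hb', map_one]
    exact (mul_right_cancel this).symm
  rw [show x.1 = inl hc z from hxz] at hx1
  change z * (c 1 1)⁻¹ * b' 1 = 1 at hx1
  rwa [hb1, inv_mul_cancel_right] at hx1

theorem sub_swap_mul_of_commute {A : Type} [AddCommGroup A] {f : G × G → A}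
    (hf : ∀ g h j, f (g * h, j) + f (g, h) = f (h, j) + f (g, h * j)) {z g h : G}
    (hg : Commute z g) (hh : Commute z h) :
    f (g * h, z) - f (z, g * h) = (f (g, z) - f (z, g)) + (f (h, z) - f (z, h)) := by
  have e1 := sub_eq_zero.2 (hf z g h)
  have e2 := sub_eq_zero.2 (hf g z h)
  have e3 := sub_eq_zero.2 (hf g h z)
  rw [hg.eq] at e1
  rw [hh.eq] at e2
  rw [← sub_eq_zero]
  have := congrArg₂ (· - ·) (congrArg₂ (· + ·) e1 e3) e2
  simp only [add_zero, sub_zero] at this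
  rw [← this]
  abel

end TwoCocycles

section SecondCohomology

open groupCohomology

theorem IsTwoCocycle.div_swap_mul {G : Type} [Group G] {c : G → G → ℂˣ} (hc : IsTwoCocycle c)
    {z g h : G} (hg : Commute z g) (hh : Commute z h) :
    c (g * h) z / c z (g * h) = c g z / c z g * (c h z / c z h) :=
  sub_swap_mul_of_commute (A := Additive ℂˣ) (f := fun p => Additive.ofMul (c p.1 p.2)) hc hg hh

variable {G : Type} [Group G]

theorem IsTwoCocycle.div_swap_pow {c : G → G → ℂˣ} (hc : IsTwoCocycle c) {z g : G}
    (hg : Commute z g) (k : ℕ) : c (g ^ k) z / c z (g ^ k) = (c g z / c z g) ^ k := by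
  induction k with
  | zero => rw [pow_zero, pow_zero, hc.one_left z, hc.one_right z, div_self']
  | succ k ih => rw [pow_succ, hc.div_swap_mul (hg.pow_right k) hg, ih, pow_succ]

theorem IsTwoCoboundary.eq_swap {c : G → G → ℂˣ} (hc : IsTwoCoboundary c) {g h : G}
    (hgh : Commute g h) : c g h = c h g := by
  obtain ⟨b, hb⟩ := hc
  have h1 := ((hb g h).trans (mul_comm _ _)).trans (hb h g).symm
  rw [hgh.eq] at h1
  exact mul_right_cancel h1

/-- The multiplicative function of two variables underlying a 2-cocycle. -/
def cochain (f : cocycles₂ (Rep.trivial ℤ G (Additive ℂˣ))) : G → G → ℂˣ :=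
  fun g h => Additive.toMul (show Additive ℂˣ from f (g, h))

theorem isTwoCocycle_cochain (f : cocycles₂ (Rep.trivial ℤ G (Additive ℂˣ))) :
    IsTwoCocycle (cochain f) :=
  (mem_cocycles₂_iff f.1).1 f.2

theorem mem_coboundaries₂_iff_isTwoCoboundary
    (f : cocycles₂ (Rep.trivial ℤ G (Additive ℂˣ))) :
    ⇑f ∈ coboundaries₂ (Rep.trivial ℤ G (Additive ℂˣ)) ↔ IsTwoCoboundary (cochain f) := by
  constructor
  · rintro ⟨b, hb⟩
    refine ⟨fun g => Additive.toMul (show Additive ℂˣ from b g), fun g h => ?_⟩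
    have h1 : b h - b (g * h) + b g = f (g, h) := congrFun hb (g, h)
    have h2 : f (g, h) + b (g * h) = b g + b h := by rw [← h1]; abel
    exact h2
  · rintro ⟨b, hb⟩
    refine ⟨fun g => Additive.ofMul (b g), funext fun ⟨g, h⟩ => ?_⟩
    have h1 : b h / b (g * h) * b g = cochain f g h := by
      rw [div_mul_eq_mul_div, div_eq_iff_eq_mul, hb, mul_comm]
    exact h1

/-- The second cohomology of a group is computed by any surjection from the 2-cocycles whose
kernel is the 2-coboundaries. -/
theorem nonempty_H2_addEquiv {k : Type} [CommRing k] (A : Rep.{0} k G) {B : Type} [AddCommGroup B]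
    (Φ : cocycles₂ A →+ B) (hsurj : Function.Surjective Φ)
    (hker : ∀ f, Φ f = 0 ↔ ⇑f ∈ coboundaries₂ A) : Nonempty (groupCohomology A 2 ≃+ B) := by
  let q : cocycles₂ A →+ groupCohomology A 2 := (H2π A).hom.toAddMonoidHom
  have hq : Function.Surjective q := (ModuleCat.epi_iff_surjective (H2π A)).1 inferInstance
  have hqker : q.ker = Φ.ker := by
    ext f
    rw [AddMonoidHom.mem_ker, AddMonoidHom.mem_ker, hker]
    exact H2π_eq_zero_iff f
  exact ⟨(QuotientAddGroup.quotientKerEquivOfSurjective q hq).symm.trans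
    ((QuotientAddGroup.quotientAddEquivOfEq hqker).trans
      (QuotientAddGroup.quotientKerEquivOfSurjective Φ hsurj))⟩

variable {H : Type} [Group H]

/-- The character `h ↦ c(h, ζ) / c(ζ, h)` attached to a 2-cocycle and a central element `ζ`. -/
def swapCharacter (j : H →* G) {ζ : G} (hζ : ∀ g, Commute ζ g) {c : G → G → ℂˣ}
    (hc : IsTwoCocycle c) : H →* ℂˣ :=
  MonoidHom.mk' (fun h => c (j h) ζ / c ζ (j h)) fun x y => by
    rw [map_mul]
    exact hc.div_swap_mul (hζ (j x)) (hζ (j y))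

/-- The second cohomology of a central product of `H`, a group without nontrivial 2-cocycle
classes, and a cyclic group `⟨ζ⟩` that meets `H` in `⟨ζ ^ m⟩`. -/
theorem nonempty_H2_addEquiv_characters {j : H →* G} (hj : Function.Injective j) {ζ : G}
    (hζ : ∀ g, Commute ζ g) (hgen : ∀ g, ∃ (k : ℤ) (h : H), g = ζ ^ k * j h)
    (hH : ∀ c : H → H → ℂˣ, IsTwoCocycle c → IsTwoCoboundary c)
    {m : ℕ} {n : H} (hn : j n = ζ ^ m) (hdvd : ∀ (k : ℤ) (h : H), ζ ^ k = j h → (m : ℤ) ∣ k)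
    {S : Subgroup (H →* ℂˣ)} (hS : ∀ χ, χ ∈ S ↔ χ ^ m = 1 ∧ χ n = 1) :
    Nonempty (groupCohomology (Rep.trivial ℤ G (Additive ℂˣ)) 2 ≃+ Additive S) := by
  have hres : ∀ f : cocycles₂ (Rep.trivial ℤ G (Additive ℂˣ)),
      IsTwoCoboundary fun x y => cochain f (j x) (j y) := fun f =>
    hH _ fun x y z => by
      rw [j.map_mul x y, j.map_mul y z]
      exact isTwoCocycle_cochain f (j x) (j y) (j z)
  have hmem : ∀ f, swapCharacter j hζ (isTwoCocycle_cochain f) ∈ S := fun f => by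
    refine (hS _).2 ⟨MonoidHom.ext fun h => ?_, ?_⟩
    · have h1 := (isTwoCocycle_cochain f).div_swap_pow (hζ (j h)).symm m
      have hnh : Commute n h := hj <| by
        rw [map_mul, map_mul, hn, ((hζ (j h)).pow_left m).eq]
      have hswap : cochain f (j n) (j h) = cochain f (j h) (j n) := (hres f).eq_swap hnh
      rw [← hn, hswap, div_self'] at h1
      change (cochain f (j h) ζ / cochain f ζ (j h)) ^ m = 1
      rw [← inv_div, inv_pow, ← h1, inv_one]
    · have h1 := (isTwoCocycle_cochain f).div_swap_pow (hζ ζ) m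
      rw [← hn, div_self', one_pow] at h1
      exact h1
  let Φ : cocycles₂ (Rep.trivial ℤ G (Additive ℂˣ)) →+ Additive S :=
    AddMonoidHom.mk'
      (fun f => Additive.ofMul ⟨swapCharacter j hζ (isTwoCocycle_cochain f), hmem f⟩) fun f f' =>
        Additive.toMul.injective <| Subtype.ext <| MonoidHom.ext fun h =>
          mul_div_mul_comm (cochain f (j h) ζ) (cochain f' (j h) ζ) (cochain f ζ (j h))
            (cochain f' ζ (j h))
  have hΦ : ∀ f χ, Φ f = Additive.ofMul χ ↔
      ∀ h, cochain f (j h) ζ / cochain f ζ (j h) = χ.1 h := fun f χ =>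
    ⟨fun h x => DFunLike.congr_fun (congrArg (fun y => (Additive.toMul y).1) h) x,
      fun h => Additive.toMul.injective (Subtype.ext (MonoidHom.ext h))⟩
  refine nonempty_H2_addEquiv _ Φ (fun χ => ?_) fun f => ?_
  · obtain ⟨⟨χ, hχ⟩, rfl⟩ := Additive.ofMul.surjective χ
    obtain ⟨hχm, hχn⟩ := (hS χ).1 hχ
    have huniq : ∀ {k l : ℤ} {x y : H}, ζ ^ k * j x = ζ ^ l * j y →
        χ x = χ y ∧ (m : ℤ) ∣ k - l := fun {k l x y} h => by
      have h1 : ζ ^ (k - l) = j (y * x⁻¹) := by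
        rw [map_mul, map_inv, eq_mul_inv_iff_mul_eq, sub_eq_neg_add, _root_.zpow_add, mul_assoc, h,
          _root_.zpow_neg, inv_mul_cancel_left]
      obtain ⟨t, ht⟩ := hdvd _ _ h1
      refine ⟨?_, t, ht⟩
      have h2 : y * x⁻¹ = n ^ t := hj <| by
        rw [← h1, ht, _root_.zpow_mul, zpow_natCast, map_zpow, hn]
      have h3 := congrArg χ h2
      rw [map_mul, map_inv, map_zpow, hχn, _root_.one_zpow, mul_inv_eq_one] at h3
      exact h3.symm
    choose K X hKX using hgen
    have hXmul : ∀ g h, χ (X (g * h)) = χ (X g) * χ (X h) ∧ (m : ℤ) ∣ K (g * h) - (K g + K h) := by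
      intro g h
      rw [← map_mul]
      refine huniq ?_
      rw [← hKX, map_mul, _root_.zpow_add, mul_assoc, ← mul_assoc (ζ ^ K h),
        ((hζ (j (X g))).zpow_left _).eq, mul_assoc, ← hKX h, ← mul_assoc, ← hKX]
    have hpow : ∀ x {k l : ℤ}, (m : ℤ) ∣ k - l → χ x ^ k = χ x ^ l := by
      rintro x k l ⟨t, ht⟩
      have h1 : χ x ^ m = 1 := DFunLike.congr_fun hχm x
      rw [← sub_add_cancel k l, ht, _root_.zpow_add, _root_.zpow_mul, zpow_natCast, h1,
        _root_.one_zpow, one_mul]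
    let c : G × G → Additive ℂˣ := fun p => Additive.ofMul (χ (X p.1) ^ K p.2)
    have hc : c ∈ cocycles₂ (Rep.trivial ℤ G (Additive ℂˣ)) := by
      refine (mem_cocycles₂_iff (A := Rep.trivial ℤ G (Additive ℂˣ)) c).2 fun g h l => ?_
      change χ (X (g * h)) ^ K l * χ (X g) ^ K h = χ (X h) ^ K l * χ (X g) ^ K (h * l)
      rw [(hXmul g h).1, hpow _ (hXmul h l).2, _root_.zpow_add, mul_zpow]
      have hrot : ∀ u v w : ℂˣ, u * v * w = v * (w * u) := fun u v w => by
        rw [mul_comm u, mul_assoc, mul_comm u]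
      exact hrot _ _ _
    refine ⟨⟨c, hc⟩, (hΦ _ _).2 fun h => ?_⟩
    change χ (X (j h)) ^ K ζ / χ (X ζ) ^ K (j h) = χ h
    have h1 := huniq (k := K (j h)) (x := X (j h)) (l := 0) (y := h)
      (by rw [← hKX, zpow_zero, one_mul])
    have h2 := huniq (k := K ζ) (x := X ζ) (l := 1) (y := 1)
      (by rw [← hKX, zpow_one, map_one, mul_one])
    rw [h1.1, h2.1, map_one, _root_.one_zpow, div_one, hpow h h2.2, zpow_one]
  · rw [mem_coboundaries₂_iff_isTwoCoboundary]
    constructor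
    · intro h
      refine (isTwoCocycle_cochain f).isTwoCoboundary_of_cyclic hj hζ hgen (hres f) fun x => ?_
      exact div_eq_one.1 ((hΦ f 1).1 h x)
    · exact fun h => (hΦ f 1).2 fun x => div_eq_one.2 (h.eq_swap (hζ (j x)).symm)

end SecondCohomology

section ScalarExtension

theorem scalarGL_commute (z : ℂˣ) (g : GL (Fin 2) ℂ) : Commute (scalarGL z) g :=
  Units.ext (Algebra.commutes (z : ℂ) (g : Matrix (Fin 2) (Fin 2) ℂ))

theorem scalarGL_pow (z : ℂˣ) (k : ℕ) : scalarGL z ^ k = scalarGL (z ^ k) :=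
  (map_pow (Units.map _) z k).symm

theorem det_scalarGL (z : ℂˣ) : Matrix.GeneralLinearGroup.det (scalarGL z) = z ^ 2 :=
  Units.ext <| by simp [scalarGL, Matrix.algebraMap_eq_diagonal, sq]

theorem scalarGL_neg_one :
    ((scalarGL (-1) : GL (Fin 2) ℂ) : Matrix (Fin 2) (Fin 2) ℂ) = -1 := by
  simp [scalarGL]

theorem le_muG (m : ℕ) (G₁ : Subgroup (GL (Fin 2) ℂ)) : G₁ ≤ muG m G₁ :=
  fun _ hg => Subgroup.subset_closure (Or.inr hg)

theorem exists_eq_zpow_mul_of_mem_muG {m : ℕ} (hm : 0 < m) {G₁ : Subgroup (GL (Fin 2) ℂ)}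
    {z : ℂˣ} (hz : IsPrimitiveRoot z (2 * m)) {g : GL (Fin 2) ℂ} (hg : g ∈ muG m G₁) :
    ∃ (k : ℤ), ∃ h ∈ G₁, g = scalarGL z ^ k * h := by
  induction hg using Subgroup.closure_induction with
  | mem g hg =>
    obtain ⟨w, hw, rfl⟩ | hg := hg
    · have : NeZero (2 * m) := ⟨by positivity⟩
      obtain ⟨i, -, rfl⟩ := hz.eq_pow_of_mem_rootsOfUnity ((mem_rootsOfUnity _ _).2 hw)
      exact ⟨i, 1, one_mem _, by rw [zpow_natCast, mul_one, scalarGL_pow]⟩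
    · exact ⟨0, g, hg, by rw [zpow_zero, one_mul]⟩
  | one => exact ⟨0, 1, one_mem _, by rw [zpow_zero, one_mul]⟩
  | mul _ _ _ _ hx hy =>
    obtain ⟨k, x, hx, rfl⟩ := hx
    obtain ⟨l, y, hy, rfl⟩ := hy
    exact ⟨k + l, x * y, mul_mem hx hy, by
      rw [_root_.zpow_add, ((scalarGL_commute z x).zpow_left l).symm.mul_mul_mul_comm]⟩
  | inv _ _ hx =>
    obtain ⟨k, x, hx, rfl⟩ := hx
    exact ⟨-k, x⁻¹, inv_mem hx, by
      rw [((scalarGL_commute z x).zpow_left k).eq, _root_.mul_inv_rev, _root_.zpow_neg]⟩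

theorem isTwoCoboundary_of_det {G₁ : Subgroup (GL (Fin 2) ℂ)} [Finite G₁]
    (hSL : ∀ g ∈ G₁, Matrix.GeneralLinearGroup.det g = 1) {c : G₁ → G₁ → ℂˣ}
    (hc : IsTwoCocycle c) : IsTwoCoboundary c :=
  hc.isTwoCoboundary_of_retraction <|
    (TwistedProduct.isCentralExt hc).exists_retraction_of_injective_of_det
      (ρ := (Units.coeHom _).comp G₁.subtype)
      (Units.val_injective.comp Subtype.val_injective)
      fun g => congrArg Units.val (hSL g.1 g.2)

end ScalarExtension

/-- Let `G₁ ⊆ SL₂(ℂ)` be a finite subgroup containing `-I`, `m ≥ 1`, and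
`G = μ_{2m}·G₁ ⊆ GL₂(ℂ)`. Then `H²(G, ℂ*)` is isomorphic to
`Hom(μ_m, (G₁/⟨-I⟩)^∨)`, the group of characters of `G₁` of order dividing `m`
which are trivial on `-I`. -/
theorem stmt18 (m : ℕ) (hm : 0 < m) (G₁ : Subgroup (GL (Fin 2) ℂ)) [Finite G₁]
    (hSL : ∀ g ∈ G₁, Matrix.GeneralLinearGroup.det g = 1)
    (negI : ↥G₁) (hneg : ((negI : GL (Fin 2) ℂ) : Matrix (Fin 2) (Fin 2) ℂ) = -1) :
    Nonempty ((groupCohomology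
        (Rep.trivial ℤ ↥(muG m G₁) (Additive ℂˣ)) 2) ≃+
      Additive ↥(charSubgroup G₁ m negI)) := by
  have : NeZero (2 * m) := ⟨by positivity⟩
  obtain ⟨w, hw⟩ : ∃ w : ℂ, IsPrimitiveRoot w (2 * m) :=
    ⟨_, Complex.isPrimitiveRoot_exp (2 * m) (NeZero.ne _)⟩
  obtain ⟨z, rfl⟩ := hw.isUnit (NeZero.ne _)
  have hz : IsPrimitiveRoot z (2 * m) := IsPrimitiveRoot.coe_units_iff.1 hw
  have hzm : z ^ m = -1 :=
    Units.ext (hw.pow (by positivity) (mul_comm 2 m)).eq_neg_one_of_two_right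
  let ζ : muG m G₁ := ⟨scalarGL z, Subgroup.subset_closure (Or.inl ⟨z, hz.pow_eq_one, rfl⟩)⟩
  refine nonempty_H2_addEquiv_characters (Subgroup.inclusion_injective (le_muG m G₁)) (ζ := ζ)
    (n := negI) (fun g => Subtype.ext (scalarGL_commute z g.1)) (fun g => ?_)
    (fun c => isTwoCoboundary_of_det hSL) (Subtype.ext (Units.ext ?_)) (fun k h hk => ?_)
    fun χ => Iff.rfl
  · obtain ⟨k, h, hh, hg⟩ := exists_eq_zpow_mul_of_mem_muG hm hz g.2
    exact ⟨k, ⟨h, hh⟩, Subtype.ext hg⟩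
  · change ((negI : GL (Fin 2) ℂ) : Matrix (Fin 2) (Fin 2) ℂ) =
      ((scalarGL z ^ m : GL (Fin 2) ℂ) : Matrix (Fin 2) (Fin 2) ℂ)
    rw [hneg, scalarGL_pow, hzm, scalarGL_neg_one]
  · have h1 : scalarGL z ^ k = h := congrArg Subtype.val hk
    have h2 := congrArg Matrix.GeneralLinearGroup.det h1
    rw [hSL _ h.2, map_zpow, det_scalarGL, ← zpow_natCast, ← _root_.zpow_mul,
      hz.zpow_eq_one_iff_dvd] at h2
    push_cast at h2
    exact Int.dvd_of_mul_dvd_mul_left two_ne_zero h2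
end
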